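/- Let p be a prime, F a field of characteristic p, n a positive integer, and r, s integers with 1 ≤ r ≤ s < p^{n+1}. Write r = r_0·p^n + r_1 and s = s_0·p^n + s_1 where r_0, s_0 ≥ 0 and 1 ≤ r_1, s_1 with r_1 + s_1 ≤ p^n. Let μ-multiset Λ(r_1,s_1) denote the multiset of parts such that J_{r_1} ⊗ J_{s_1} is similar over F to the block-diagonal matrix with m_ν blocks J_ν for each ν in Λ(r_1,s_1), written with distinct parts ν_1 > ⋯ > ν_ℓ > 0 and multiplicities n_1,…,n_ℓ ≥ 1. Set (c, d_1, d_2) = (0, r_0, r_0) if r_0 + s_0 < p, and (c, d_1, d_2) = (r + s − p^{n+1}, p − s_0 − 1, p − s_0) if r_0 + s_0 ≥ p. Then J_r ⊗ J_s is similar over F to the block-diagonal matrix consisting of: c blocks J_{p^{n+1}}; |r_1 − s_1| blocks J_{(s_0−r_0+2i)p^n} for each 1 ≤ i ≤ d_1; max(0, r_1 − s_1) blocks J_{(s_0−r_0)p^n}; (p^n − r_1 − s_1) blocks J_{(s_0−r_0+2i−1)p^n} for each 1 ≤ i ≤ d_2; and, for each 1 ≤ j ≤ ℓ, n_j blocks J_{(s_0−r_0+2i)p^n+ν_j}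 for each 0 ≤ i ≤ d_1 and n_j blocks J_{(s_0−r_0+2i)p^n−ν_j} for each 1 ≤ i ≤ d_1. -/

import Mathlib

/-!
A unipotent matrix is determined up to similarity by the dimensions `dim ker (A - 1)^k`; for a
block-diagonal Jordan matrix with blocks `J_β` this dimension is `∑ min(β, k)` (`similar_of_kdim`,
`kdim_of_similar`). Moreover `J_r ⊗ J_s - 1` is conjugate to multiplication by `x + y` on
`F[x, y] / (x^r, y^s)` (`exists_kronecker_conj`). The theorem is therefore an identity between
`kdim F r s k = dim ker (x + y)^k` and the sum `∑ min(β, k)` over the predicted blocks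
(`kdim_eq_blockCount`).

The dimension `kdim F r s k` is a sum of values of the Hilbert function of the syzygies of
`x^r, (x + y)^k, y^s` (`finrank_ker_formula`). Dehomogenised, a syzygy is a pair `(f, h)` of
polynomials with `f` vanishing to order `r` at `0`, `h` vanishing to order `k` at `-1` and `f + h`
vanishing to order `s` at `∞`; these form the spaces `lat`. Let `q = p^n`. For exponents `(a, b, c)`
with `a + b + c = 2d`, `d < p`, satisfying the triangle inequalities, a Wronskian argument in the
style of Mason and Stothers (`lat_eq_zero`) shows that no syzygy has degree below `d`. Hence there is
a matrix of syzygies of degree `d` whose determinant is a constant multiple of `X^a (1+X)^b`.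
Substituting `X ↦ X^q`, which commutes with `q`-th powers of `X` and `1 + X`, gives a matrix carrying
the syzygies at `(i, j, l)` with `i, j, l ≤ q` isomorphically to those at `(aq + i, bq ± j, cq + l)`,
with a shift of degree (`transfer_plus`, `transfer_minus`). This expresses `kdim F r s k` through
`kdim F r₁ s₁ l` for `k = (s₀ - r₀ + 2i)q ± l` with `0 ≤ i ≤ d₁` (`kdim_plus`, `kdim_minus`), that is,
for all `k` between `(s₀ - r₀)q` and `(s₀ - r₀ + 2d₁ + 1)q`.

Outside this range both sides are affine in `k`. For `kdim` this follows from its concavity: below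
the range from the slope bound `kdim F r s 1 ≤ r`, and above it from the rank bound for
`(x + y)^(pq - 1)` (`kdim_top`), which produces the `r + s - pq` blocks of size `pq` when
`r₀ + s₀ ≥ p`.
-/

open Kronecker

/-- The `m × m` Jordan block with eigenvalue `1`: ones on the main diagonal and the
superdiagonal, zeros elsewhere. -/
def jordanBlock (F : Type*) [Zero F] [One F] (m : ℕ) : Matrix (Fin m) (Fin m) F :=
  Matrix.of fun i j => if (j : ℕ) = (i : ℕ) ∨ (j : ℕ) = (i : ℕ) + 1 then 1 else 0

/-- The block-diagonal matrix whose diagonal blocks are the Jordan blocks `J_{d i}`, `i : ι`. -/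
def jordanBlockDiag (F : Type*) [Field F] {ι : Type} [DecidableEq ι] (d : ι → ℕ) :
    Matrix ((i : ι) × Fin (d i)) ((i : ι) × Fin (d i)) F :=
  Matrix.blockDiagonal' fun i => jordanBlock F (d i)

/-- Similarity of square matrices, possibly indexed by different (finite) types:
both matrices represent the same linear endomorphism up to a linear change of basis. -/
def MatSimilar (F : Type*) [Field F] {n m : Type*} [Fintype n] [Fintype m]
    (A : Matrix n n F) (B : Matrix m m F) : Prop :=
  ∃ e : (n → F) ≃ₗ[F] (m → F), ∀ v, e (A.mulVec v) = B.mulVec (e v)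

open Polynomial

/-! ### The syzygy spaces and the Wronskian bound -/

section Lattice
variable {F : Type*} [Field F]

/-- Polynomials of degree `< z`, where the bound `z` is an integer (for `z ≤ 0` only `0`). -/
def degB (F : Type*) [Field F] (z : ℤ) : Submodule F F[X] where
  carrier := {p | ∀ n : ℕ, z ≤ n → p.coeff n = 0}
  add_mem' := fun {p q} hp hq n hn => by rw [coeff_add, hp n hn, hq n hn, add_zero]
  zero_mem' := fun n _ => coeff_zero n
  smul_mem' := fun c p hp n hn => by rw [coeff_smul, hp n hn, smul_zero]

theorem mem_degB {z : ℤ} {p : F[X]} : p ∈ degB F z ↔ ∀ n : ℕ, z ≤ n → p.coeff n = 0 := Iff.rfl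

theorem mem_degB_iff {z : ℤ} {p : F[X]} : p ∈ degB F z ↔ p = 0 ∨ (p.natDegree : ℤ) < z := by
  constructor
  · intro h
    by_cases hp : p = 0
    · exact Or.inl hp
    · right
      by_contra hlt
      exact hp (leadingCoeff_eq_zero.1 (h p.natDegree (not_lt.1 hlt)))
  · rintro (rfl | h) n hn
    · simp
    · exact coeff_eq_zero_of_natDegree_lt (by omega)

theorem degB_mono {z w : ℤ} (h : z ≤ w) : degB F z ≤ degB F w := fun _ hp n hn => hp n (h.trans hn)

theorem degB_nonpos {z : ℤ} {p : F[X]} (hp : p ∈ degB F z) (hz : z ≤ 0) : p = 0 := by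
  ext n
  exact hp n (by omega)

theorem degB_mul {z w u : ℤ} {p q : F[X]} (hp : p ∈ degB F z) (hq : q ∈ degB F w)
    (hu : z + w - 1 ≤ u) : p * q ∈ degB F u := by
  rw [mem_degB_iff] at *
  rcases hp with rfl | hp
  · simp
  rcases hq with rfl | hq
  · simp
  right
  have := natDegree_mul_le (p := p) (q := q)
  omega

theorem degB_of_mul_monic {z : ℤ} {p q : F[X]} (hq : q.Monic) (h : p * q ∈ degB F z) :
    p ∈ degB F (z - q.natDegree) := by
  rw [mem_degB_iff] at *
  rcases h with h | h
  · left
    rcases mul_eq_zero.1 h with h | h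
    · exact h
    · exact absurd h hq.ne_zero
  · by_cases hp : p = 0
    · exact Or.inl hp
    right
    rw [natDegree_mul hp hq.ne_zero] at h
    push_cast at h
    omega

theorem degB_eq_zero_of_dvd {z : ℤ} {p q : F[X]} (hq : q.Monic) (h : q ∣ p) (hp : p ∈ degB F z)
    (hz : z ≤ q.natDegree) : p = 0 := by
  obtain ⟨t, rfl⟩ := h
  rw [mul_comm] at hp ⊢
  rw [degB_nonpos (degB_of_mul_monic hq hp) (by omega), zero_mul]

theorem degB_derivative {z : ℤ} {p : F[X]} (hp : p ∈ degB F z) :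
    derivative p ∈ degB F (z - 1) := by
  intro n hn
  rw [coeff_derivative, hp (n + 1) (by push_cast; omega), zero_mul]

theorem degB_expand {z w : ℤ} {p : F[X]} {q : ℕ} (hp : p ∈ degB F z) (hw : (z - 1) * q + 1 ≤ w) :
    expand F q p ∈ degB F w := by
  rw [mem_degB_iff] at *
  rcases hp with rfl | hp
  · simp
  right
  rw [natDegree_expand]
  push_cast
  nlinarith [show (p.natDegree : ℤ) ≤ z - 1 by omega, Int.natCast_nonneg q]

theorem monic_X1 (n : ℕ) : ((1 + X : F[X]) ^ n).Monic := by
  rw [add_comm, ← C_1]; exact (monic_X_add_C _).pow n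

theorem natDegree_X1 (n : ℕ) : ((1 + X : F[X]) ^ n).natDegree = n := by
  rw [add_comm, ← C_1, natDegree_pow, natDegree_X_add_C, mul_one]

theorem monic_XX1 (a b : ℕ) : ((X : F[X]) ^ a * (1 + X) ^ b).Monic :=
  (monic_X_pow a).mul (monic_X1 b)

theorem natDegree_XX1 (a b : ℕ) : ((X : F[X]) ^ a * (1 + X) ^ b).natDegree = a + b := by
  rw [(monic_X_pow a).natDegree_mul (monic_X1 b), natDegree_X_pow, natDegree_X1]

theorem coprime_X_X1 : IsCoprime (X : F[X]) (1 + X) := ⟨-1, 1, by ring⟩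

theorem XX1_dvd {a b : ℕ} {p : F[X]} (h1 : (X : F[X]) ^ a ∣ p) (h2 : (1 + X : F[X]) ^ b ∣ p) :
    (X : F[X]) ^ a * (1 + X) ^ b ∣ p :=
  (coprime_X_X1.pow).mul_dvd h1 h2

/-- The degree-`(m - 1)` part of the syzygies of `(x^r, z^k, y^s)`, `z = x + y`, dehomogenised at
`y = 1`: pairs `(f, h)` of polynomials of degree `< m` such that `f` vanishes to order `r` at `0`,
`h` vanishes to order `k` at `-1`, and `f + h` vanishes to order `s` at `∞`. -/
def lat (F : Type*) [Field F] (r k s : ℕ) (m : ℤ) : Submodule F (F[X] × F[X]) where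
  carrier := {x | X ^ r ∣ x.1 ∧ (1 + X) ^ k ∣ x.2 ∧ x.1 ∈ degB F m ∧ x.2 ∈ degB F m ∧
    x.1 + x.2 ∈ degB F (m - s)}
  add_mem' := fun {x y} hx hy =>
    ⟨dvd_add hx.1 hy.1, dvd_add hx.2.1 hy.2.1, add_mem hx.2.2.1 hy.2.2.1,
      add_mem hx.2.2.2.1 hy.2.2.2.1, by
        have := add_mem hx.2.2.2.2 hy.2.2.2.2
        rwa [show x.1 + x.2 + (y.1 + y.2) = (x + y).1 + (x + y).2 by
          simp only [Prod.fst_add, Prod.snd_add]; ring] at this⟩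
  zero_mem' := ⟨dvd_zero _, dvd_zero _, zero_mem _, zero_mem _, by simp⟩
  smul_mem' := fun c x hx =>
    ⟨dvd_smul_of_dvd c hx.1, dvd_smul_of_dvd c hx.2.1, Submodule.smul_mem _ c hx.2.2.1,
      Submodule.smul_mem _ c hx.2.2.2.1, by
        have := Submodule.smul_mem _ c hx.2.2.2.2
        rwa [smul_add] at this⟩

theorem mem_lat {r k s : ℕ} {m : ℤ} {f h : F[X]} : (f, h) ∈ lat F r k s m ↔
    X ^ r ∣ f ∧ (1 + X) ^ k ∣ h ∧ f ∈ degB F m ∧ h ∈ degB F m ∧ f + h ∈ degB F (m - s) := Iff.rfl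

theorem lat_mono {r k s : ℕ} {m m' : ℤ} (h : m ≤ m') : lat F r k s m ≤ lat F r k s m' :=
  fun _ hx => ⟨hx.1, hx.2.1, degB_mono h hx.2.2.1, degB_mono h hx.2.2.2.1,
    degB_mono (by omega) hx.2.2.2.2⟩

theorem exists_coprime_factors (f h : F[X]) :
    ∃ g f1 h1 : F[X], IsCoprime f1 h1 ∧ f = g * f1 ∧ h = g * h1 := by
  let := UniqueFactorizationMonoid.toGCDMonoid F[X]
  obtain ⟨f1, h1, hf, hh, hu⟩ := extract_gcd f h
  exact ⟨gcd f h, f1, h1, (gcd_isUnit_iff _ _).1 hu, hf, hh⟩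

/-- In characteristic `p`, two nonzero polynomials of degree `< p` with vanishing Wronskian are
proportional. -/
theorem proportional_of_wronskian (p : ℕ) [CharP F p] {f h : F[X]} {d : ℕ}
    (hd : d ≤ p) (hf : f ∈ degB F d) (hh : h ∈ degB F d) (hW : wronskian f h = 0) (hf0 : f ≠ 0)
    (hh0 : h ≠ 0) : ∃ c : F, c ≠ 0 ∧ h = C c * f := by
  classical
  obtain ⟨g, f1, h1, hcop, rfl, rfl⟩ := exists_coprime_factors f h
  have hg0 : g ≠ 0 := left_ne_zero_of_mul hf0
  have hW1 : wronskian f1 h1 = 0 := by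
    have : wronskian (g * f1) (g * h1) = g ^ 2 * wronskian f1 h1 := by
      simp only [wronskian, derivative_mul]; ring
    rw [this] at hW
    exact (mul_eq_zero.1 hW).resolve_left (pow_ne_zero 2 hg0)
  have key : ∀ u : F[X], u ≠ 0 → g * u ∈ degB F d → derivative u = 0 → ∃ c, c ≠ 0 ∧ u = C c := by
    intro u hu hdu hder
    have hdeg : u.natDegree < p := by
      rw [mem_degB_iff] at hdu
      rcases hdu with h0 | hdu
      · exact absurd h0 (mul_ne_zero hg0 hu)
      · rw [natDegree_mul hg0 hu] at hdu
        push_cast at hdu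
        omega
    have h0 : u.natDegree = 0 := by
      by_contra hne
      obtain ⟨m, hm⟩ := Nat.exists_eq_succ_of_ne_zero hne
      have := congrArg (fun v => coeff v m) hder
      simp only [coeff_derivative, coeff_zero] at this
      rcases mul_eq_zero.1 this with h | h
      · rw [← Nat.succ_eq_add_one, ← hm] at h
        exact hu (leadingCoeff_eq_zero.1 h)
      · have h' : ((m + 1 : ℕ) : F) = 0 := by exact_mod_cast h
        rw [CharP.cast_eq_zero_iff F p] at h'
        exact absurd (Nat.le_of_dvd (by omega) h') (by omega)
    rw [natDegree_eq_zero] at h0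
    obtain ⟨c, rfl⟩ := h0
    exact ⟨c, by rintro rfl; simp at hu, rfl⟩
  obtain ⟨hd1, hd2⟩ := hcop.wronskian_eq_zero_iff.1 hW1
  obtain ⟨c1, hc1, rfl⟩ := key f1 (right_ne_zero_of_mul hf0) hf hd1
  obtain ⟨c2, hc2, rfl⟩ := key h1 (right_ne_zero_of_mul hh0) hh hd2
  refine ⟨c2 / c1, div_ne_zero hc2 hc1, ?_⟩
  rw [mul_left_comm, ← C_mul, div_mul_cancel₀ _ hc1]

/-- The Mason–Stothers argument: at an even point `(a, b, c)` of the range `a + b + c ≤ 2p`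
satisfying the triangle inequalities there is no syzygy below the middle degree. -/
theorem lat_eq_zero (p : ℕ) [CharP F p] {a b c d : ℕ} (hsum : a + b + c = 2 * d) (hd : d ≤ p)
    (ha : a ≤ b + c) (hb : b ≤ a + c) (hc : c ≤ a + b) {f h : F[X]}
    (hx : (f, h) ∈ lat F a b c d) : f = 0 ∧ h = 0 := by
  obtain ⟨h1, h2, h3, h4, h5⟩ := mem_lat.1 hx
  have hfh : f = 0 → h = 0 := by
    rintro rfl
    rw [zero_add] at h5
    exact degB_eq_zero_of_dvd (monic_X1 b) h2 h5 (by rw [natDegree_X1]; omega)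
  have hhf : h = 0 → f = 0 := by
    rintro rfl
    rw [add_zero] at h5
    exact degB_eq_zero_of_dvd (monic_X_pow a) h1 h5 (by rw [natDegree_X_pow]; omega)
  by_contra hne
  have hf0 : f ≠ 0 := fun h0 => hne ⟨h0, hfh h0⟩
  have hh0 : h ≠ 0 := fun h0 => hne ⟨hhf h0, h0⟩
  have hapos : 0 < a := by
    by_contra h0
    exact hh0 (degB_eq_zero_of_dvd (monic_X1 b) h2 h4 (by rw [natDegree_X1]; omega))
  have hbpos : 0 < b := by
    by_contra h0
    exact hf0 (degB_eq_zero_of_dvd (monic_X_pow a) h1 h3 (by rw [natDegree_X_pow]; omega))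
  have hW : wronskian f h = 0 := by
    have hdeg : wronskian f h ∈ degB F (a + b - 2) := by
      have : wronskian f h = f * derivative (f + h) - derivative f * (f + h) := by
        simp only [wronskian, derivative_add]; ring
      rw [this]
      refine sub_mem (degB_mul h3 (degB_derivative h5) (by omega))
        (degB_mul (degB_derivative h3) h5 (by omega))
    refine degB_eq_zero_of_dvd (monic_XX1 (a - 1) (b - 1)) (XX1_dvd ?_ ?_) hdeg
      (by rw [natDegree_XX1]; omega)
    · rw [wronskian]
      refine dvd_sub (((pow_dvd_pow X (Nat.sub_le a 1)).trans h1).mul_right _) (Dvd.dvd.mul_right ?_ _)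
      exact pow_sub_one_dvd_derivative_of_pow_dvd h1
    · rw [wronskian]
      refine dvd_sub (Dvd.dvd.mul_left ?_ _) (((pow_dvd_pow _ (Nat.sub_le b 1)).trans h2).mul_left _)
      exact pow_sub_one_dvd_derivative_of_pow_dvd h2
  obtain ⟨e, he, rfl⟩ := proportional_of_wronskian p hd h3 h4 hW hf0 hh0
  have h2' : (1 + X : F[X]) ^ b ∣ f := by
    rw [mul_comm] at h2
    exact (IsUnit.dvd_mul_right (isUnit_C.2 (IsUnit.mk0 _ he))).1 h2
  exact hf0 (degB_eq_zero_of_dvd (monic_XX1 a b) (XX1_dvd h1 h2') h3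
    (by rw [natDegree_XX1]; omega))
end Lattice

/-! ### Frobenius transfer along a matrix of syzygies -/

section Transfer
variable {F : Type*} [Field F]

/-- A dimension count: `(m - a) + (m - b)` free coefficients against `c` conditions. -/
theorem lat_exists {a b c m : ℕ} (h : c < (m - a) + (m - b)) :
    ∃ f g : F[X], (f, g) ∈ lat F a b c m ∧ (f, g) ≠ 0 := by
  let φ : (degreeLT F (m - a) × degreeLT F (m - b)) →ₗ[F] (Fin c → F) :=
    LinearMap.pi fun j => (lcoeff F (m - 1 - j)) ∘ₗ
      (((LinearMap.mulLeft F (X ^ a)) ∘ₗ (degreeLT F (m - a)).subtype).coprod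
        ((LinearMap.mulLeft F ((1 + X) ^ b)) ∘ₗ (degreeLT F (m - b)).subtype))
  have : Module.Finite F (degreeLT F (m - a)) := Module.Finite.equiv (degreeLTEquiv F _).symm
  have : Module.Finite F (degreeLT F (m - b)) := Module.Finite.equiv (degreeLTEquiv F _).symm
  have hker : LinearMap.ker φ ≠ ⊥ := by
    apply LinearMap.ker_ne_bot_of_finrank_lt
    rw [Module.finrank_prod, (degreeLTEquiv F _).finrank_eq, (degreeLTEquiv F _).finrank_eq]
    simpa using h
  obtain ⟨⟨⟨f, hf⟩, ⟨g, hg⟩⟩, hx, hx0⟩ := Submodule.exists_mem_ne_zero_of_ne_bot hker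
  have hdeg : ∀ {u : ℕ} {f e : F[X]}, f ∈ degreeLT F (m - u) → e ∈ degB F (u + 1) →
      e * f ∈ degB F m := by
    intro u f e hf he
    rw [mem_degreeLT] at hf
    by_cases h0 : f = 0
    · simp [h0]
    · rw [degree_eq_natDegree h0] at hf
      have hf' : f.natDegree < m - u := by exact_mod_cast hf
      exact degB_mul he (mem_degB_iff.2 (Or.inr (Int.lt_succ f.natDegree))) (by omega)
  have d1 : X ^ a * f ∈ degB F m := hdeg hf (mem_degB_iff.2 (Or.inr (by
    rw [natDegree_X_pow]; omega)))
  have d2 : (1 + X) ^ b * g ∈ degB F m := hdeg hg (mem_degB_iff.2 (Or.inr (by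
    rw [natDegree_X1]; omega)))
  refine ⟨X ^ a * f, (1 + X) ^ b * g, mem_lat.2 ⟨dvd_mul_right _ _, dvd_mul_right _ _, d1, d2, ?_⟩, ?_⟩
  · intro n hn
    by_cases hnm : m ≤ n
    · rw [coeff_add, d1 n (by omega), d2 n (by omega), add_zero]
    · have := congrFun (LinearMap.mem_ker.1 hx) ⟨m - 1 - n, by omega⟩
      simp only [φ, LinearMap.pi_apply, LinearMap.comp_apply, LinearMap.coprod_apply,
        Submodule.subtype_apply, LinearMap.mulLeft_apply, lcoeff_apply, Pi.zero_apply] at this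
      rwa [show m - 1 - (m - 1 - n) = n by omega] at this
  · intro h0
    apply hx0
    obtain ⟨h1, h2⟩ := Prod.mk_eq_zero.1 h0
    have e1 : f = 0 := (mul_eq_zero.1 h1).resolve_left (pow_ne_zero _ X_ne_zero)
    have e2 : g = 0 := (mul_eq_zero.1 h2).resolve_left (monic_X1 b).ne_zero
    subst e1; subst e2; rfl

/-- Multiplication of pairs of polynomials by a `2 × 2` matrix. -/
noncomputable def mulMat (A B C E : F[X]) : (F[X] × F[X]) →ₗ[F] (F[X] × F[X]) :=
  LinearMap.prod ((LinearMap.mulLeft F A).coprod (LinearMap.mulLeft F B))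
    ((LinearMap.mulLeft F C).coprod (LinearMap.mulLeft F E))

theorem mulMat_apply (A B C E f g : F[X]) :
    mulMat A B C E (f, g) = (A * f + B * g, C * f + E * g) := rfl

theorem mulMat_injective {A B C E : F[X]} (h : A * E - B * C ≠ 0) :
    Function.Injective (mulMat A B C E) := by
  rw [← LinearMap.ker_eq_bot, LinearMap.ker_eq_bot']
  rintro ⟨f, g⟩ h0
  rw [mulMat_apply, Prod.mk_eq_zero] at h0
  obtain ⟨h1, h2⟩ := h0
  have e1 : (A * E - B * C) * f = 0 := by linear_combination E * h1 - B * h2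
  have e2 : (A * E - B * C) * g = 0 := by linear_combination A * h2 - C * h1
  rw [(mul_eq_zero.1 e1).resolve_left h, (mul_eq_zero.1 e2).resolve_left h]
  rfl

theorem exists_mul_of_dvd {a b : ℕ} {z w : ℤ} {p : F[X]} (h1 : (X : F[X]) ^ a ∣ p)
    (h2 : (1 + X : F[X]) ^ b ∣ p) (hp : p ∈ degB F z) (hw : z ≤ w + a + b) :
    ∃ f, p = X ^ a * (1 + X) ^ b * f ∧ f ∈ degB F w := by
  obtain ⟨f, rfl⟩ := XX1_dvd h1 h2
  refine ⟨f, rfl, ?_⟩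
  rw [mul_comm] at hp
  refine degB_mono ?_ (degB_of_mul_monic (monic_XX1 a b) hp)
  rw [natDegree_XX1]; push_cast; omega

theorem X1_dvd_cancel {a b w k : ℕ} {f : F[X]} (h : (1 + X) ^ (b + k) ∣ X ^ a * (1 + X) ^ b * f) (hw : w ≤ k) :
    (1 + X) ^ w ∣ f := by
  rw [pow_add, mul_comm (X ^ a), mul_assoc] at h
  have h' := (mul_dvd_mul_iff_left (monic_X1 (F := F) b).ne_zero).1 h
  have hc : IsCoprime ((1 + X : F[X]) ^ k) (X ^ a) := (coprime_X_X1.symm).pow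
  exact (pow_dvd_pow _ hw).trans (hc.dvd_of_dvd_mul_left h')

theorem X_dvd_cancel {a b w k : ℕ} {f : F[X]} (h : X ^ (a + k) ∣ X ^ a * (1 + X) ^ b * f) (hw : w ≤ k) :
    X ^ w ∣ f := by
  rw [pow_add, mul_assoc] at h
  have h' := (mul_dvd_mul_iff_left (pow_ne_zero a (X_ne_zero (R := F)))).1 h
  have hc : IsCoprime ((X : F[X]) ^ k) ((1 + X) ^ b) := (coprime_X_X1).pow
  exact (pow_dvd_pow _ hw).trans (hc.dvd_of_dvd_mul_left h')

theorem finrank_map_inj {V W : Type*} [AddCommGroup V] [Module F V] [AddCommGroup W] [Module F W]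
    (φ : V →ₗ[F] W) (hφ : Function.Injective φ) (S : Submodule F V) :
    Module.finrank F (S.map φ) = Module.finrank F S :=
  (Submodule.equivMapOfInjective φ hφ S).finrank_eq.symm

theorem expand_X_dvd {q a a' : ℕ} {A : F[X]} (h : X ^ a ∣ A) (h' : a' ≤ a * q) :
    X ^ a' ∣ expand F q A := by
  have := map_dvd (expand F q) h
  rw [map_pow, expand_X, ← pow_mul] at this
  exact (pow_dvd_pow _ (by rw [mul_comm q]; exact h')).trans this

theorem expand_X1_dvd {q a a' : ℕ} (hq : (1 + X : F[X]) ^ q = 1 + X ^ q) {A : F[X]}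
    (h : (1 + X) ^ a ∣ A) (h' : a' ≤ a * q) :
    (1 + X) ^ a' ∣ expand F q A := by
  have := map_dvd (expand F q) h
  rw [map_pow, map_add, map_one, expand_X, ← hq, ← pow_mul] at this
  exact (pow_dvd_pow _ (by rw [mul_comm q]; exact h')).trans this

set_option maxHeartbeats 1000000 in
/-- The Frobenius transfer. A matrix `(A B; C E)` with the prescribed vanishing at `0`, `-1`, `∞`
and determinant `κ X^a (1+X)^b` maps, after substituting `X ↦ X^q`, the lattice at `(i, j, l)` onto
`(1+X)^w` times the lattice at `(aq+i, K, cq+l)`. The two cases in use are `K = bq + j`, `w = 0`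
and `K = bq - j`, `w = j`. -/
theorem transfer {q a b c d : ℕ} (hq : (1 + X : F[X]) ^ q = 1 + X ^ q)
    (hsum : a + b + c = 2 * d) {A B C E : F[X]} {κ : F} (hκ : κ ≠ 0)
    (hdet : A * E - B * C = Polynomial.C κ * (X ^ a * (1 + X) ^ b))
    (hA : X ^ a ∣ A) (hB : X ^ (a + 1) ∣ B) (hE : (1 + X) ^ b ∣ E) {eA eC : ℕ}
    (hA' : (1 + X) ^ eA ∣ A) (hC' : (1 + X) ^ eC ∣ C)
    (dA : A ∈ degB F (d + 1)) (dB : B ∈ degB F (d + 1)) (dC : C ∈ degB F (d + 1))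
    (dE : E ∈ degB F (d + 1)) (dAC : A + C ∈ degB F (d + 1 - c)) (dBE : B + E ∈ degB F (d + 1 - c))
    (dD : B + E - (A + C) ∈ degB F (d - c))
    {i j l w K : ℕ} (hi : i ≤ q) (hl : l ≤ q) (h1 : w ≤ eA * q) (h2 : w ≤ j)
    (h3 : w + K ≤ eC * q) (h4 : w + K ≤ b * q + j) (h5 : b * q ≤ w + K)
    (h6 : b * q + j ≤ eA * q + w + K) (h7 : b * q + j ≤ eC * q + w) (m : ℤ) :
    Module.finrank F (lat F (a * q + i) K (c * q + l) (m + d * q - w)) =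
      Module.finrank F (lat F i j l m) := by
  have dA := degB_expand (q := q) dA le_rfl
  have dB := degB_expand (q := q) dB le_rfl
  have dC := degB_expand (q := q) dC le_rfl
  have dE := degB_expand (q := q) dE le_rfl
  have dAC := degB_expand (q := q) dAC le_rfl
  have dBE := degB_expand (q := q) dBE le_rfl
  have dD := degB_expand (q := q) dD le_rfl
  have vA := expand_X_dvd (q := q) hA le_rfl
  have vB := expand_X_dvd (q := q) hB le_rfl
  have wA := expand_X1_dvd hq hA' le_rfl
  have wC := expand_X1_dvd hq hC' le_rfl
  have wE := expand_X1_dvd hq hE le_rfl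
  have det := congrArg (expand F q) hdet
  simp only [map_add, map_sub, map_mul, map_pow, map_one, expand_X, expand_C, ← hq, ← pow_mul,
    mul_comm q] at det dAC dBE dD
  generalize expand F q A = A at *
  generalize expand F q B = B at *
  generalize expand F q C = C at *
  generalize expand F q E = E at *
  have hsq : (a : ℤ) * q + b * q + c * q = 2 * (d * q) := by
    have : (a : ℤ) + b + c = 2 * d := by exact_mod_cast hsum
    linear_combination (q : ℤ) * this
  -- products are normalised so that linear arithmetic applies
  simp only [add_mul, sub_mul, one_mul, add_sub_cancel_right] at dA dB dC dE dAC dBE dD vB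
  have wu := (monic_X1 (F := F) w)
  have hu0 : (1 + X : F[X]) ^ w ≠ 0 := wu.ne_zero
  have hdet0 : A * E - B * C ≠ 0 := by
    rw [det]; exact mul_ne_zero (C_ne_zero.2 hκ) (monic_XX1 _ _).ne_zero
  have dX : ∀ {k l : ℕ} {f g : F[X]}, k ≤ l → (X : F[X]) ^ l ∣ f → (X : F[X]) ^ k ∣ f * g :=
    fun h h' => ((pow_dvd_pow _ h).trans h').mul_right _
  have key : (lat F i j l m).map (mulMat A B C E) =
      (lat F (a * q + i) K (c * q + l) (m + d * q - w)).map
        (mulMat ((1 + X) ^ w) 0 0 ((1 + X) ^ w)) := by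
    ext ⟨U, V⟩
    constructor
    · rintro ⟨⟨f, g⟩, hfg, he⟩
      rw [mulMat_apply, Prod.mk.injEq] at he
      obtain ⟨rfl, rfl⟩ := he
      obtain ⟨f1, g1, f2, g2, fg⟩ := mem_lat.1 hfg
      have dP : A * f + B * g ∈ degB F (m + d * q) :=
        add_mem (degB_mul dA f2 (by omega)) (degB_mul dB g2 (by omega))
      have dQ : C * f + E * g ∈ degB F (m + d * q) :=
        add_mem (degB_mul dC f2 (by omega)) (degB_mul dE g2 (by omega))
      have dPQ : (A * f + B * g) + (C * f + E * g) ∈ degB F (m + d * q - (c * q + l)) := by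
        rw [show (A * f + B * g) + (C * f + E * g) =
          (A + C) * (f + g) + (B + E - (A + C)) * g by ring]
        exact add_mem (degB_mul dAC fg (by omega)) (degB_mul dD g2 (by omega))
      obtain ⟨P, hP, dP'⟩ := exists_mul_of_dvd (a := a * q + i) (b := w)
        (w := m + d * q - w - (a * q + i))
        (dvd_add (by rw [pow_add]; exact mul_dvd_mul vA f1) (dX (by omega) vB))
        (dvd_add (((pow_dvd_pow _ h1).trans wA).mul_right _)
          (((pow_dvd_pow _ h2).trans g1).mul_left _)) dP (by push_cast; omega)
      obtain ⟨Q, hQ, dQ'⟩ := exists_mul_of_dvd (a := 0) (b := w + K)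
        (w := m + d * q - w - K) (by simp)
        (dvd_add (((pow_dvd_pow _ h3).trans wC).mul_right _)
          ((pow_dvd_pow _ h4).trans (by rw [pow_add]; exact mul_dvd_mul wE g1))) dQ
          (by push_cast; omega)
      refine ⟨(X ^ (a * q + i) * P, (1 + X) ^ K * Q), mem_lat.2 ⟨dvd_mul_right _ _,
        dvd_mul_right _ _, ?_, ?_, ?_⟩, ?_⟩
      · refine degB_mul (mem_degB_iff.2 (Or.inr (Int.lt_succ _))) dP' ?_
        rw [natDegree_X_pow]; push_cast; omega
      · refine degB_mul (mem_degB_iff.2 (Or.inr (Int.lt_succ _))) dQ' ?_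
        rw [natDegree_X1]; omega
      · rw [hP, hQ, show X ^ (a * q + i) * (1 + X) ^ w * P + X ^ 0 * (1 + X) ^ (w + K) * Q =
          (X ^ (a * q + i) * P + (1 + X) ^ K * Q) * (1 + X) ^ w by ring] at dPQ
        have := degB_of_mul_monic wu dPQ
        rw [natDegree_X1] at this
        exact degB_mono (by push_cast; omega) this
      · rw [mulMat_apply, hP, hQ, Prod.mk.injEq]
        constructor <;> ring
    · rintro ⟨⟨P, Q⟩, hPQ, he⟩
      rw [mulMat_apply, Prod.mk.injEq, zero_mul, zero_mul, add_zero, zero_add] at he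
      obtain ⟨rfl, rfl⟩ := he
      obtain ⟨P1, Q1, P2, Q2, PQ⟩ := mem_lat.1 hPQ
      push_cast at PQ
      have du : (1 + X : F[X]) ^ w ∈ degB F (w + 1) :=
        mem_degB_iff.2 (Or.inr (by rw [natDegree_X1]; omega))
      have hf : (1 + X) ^ w * (E * P - B * Q) ∈ degB F (m + a * q + b * q) := by
        refine degB_mul du (w := m + a * q + b * q - w) ?_ (by omega)
        rw [show E * P - B * Q = (B + E) * P - B * (P + Q) by ring]
        exact sub_mem (degB_mul dBE P2 (by omega)) (degB_mul dB PQ (by omega))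
      have hg : (1 + X) ^ w * (A * Q - C * P) ∈ degB F (m + a * q + b * q) := by
        refine degB_mul du (w := m + a * q + b * q - w) ?_ (by omega)
        rw [show A * Q - C * P = (A + C) * Q - C * (P + Q) by ring]
        exact sub_mem (degB_mul dAC Q2 (by omega)) (degB_mul dC PQ (by omega))
      have hfg : (1 + X) ^ w * (E * P - B * Q) + (1 + X) ^ w * (A * Q - C * P) ∈
          degB F (m + a * q + b * q - l) := by
        rw [← mul_add]
        refine degB_mul du (w := m + a * q + b * q - l - w) ?_ (by omega)
        rw [show (E * P - B * Q) + (A * Q - C * P) =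
          (E - C) * (P + Q) + (-(B + E - (A + C))) * Q by ring]
        exact add_mem (degB_mul (sub_mem dE dC) PQ (by omega))
          (degB_mul (neg_mem dD) Q2 (by omega))
      have xf : X ^ (a * q + i) ∣ (1 + X) ^ w * (E * P - B * Q) :=
        (dvd_sub (P1.mul_left _) (dX (by omega) vB)).mul_left _
      have wg : (1 + X) ^ (b * q + j) ∣ (1 + X) ^ w * (A * Q - C * P) := by
        rw [mul_sub]
        refine dvd_sub ?_ ?_
        · refine (pow_dvd_pow _ h6).trans ?_
          rw [pow_add, pow_add, mul_comm (_ ^ (eA * q)), mul_assoc]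
          exact mul_dvd_mul_left _ (mul_dvd_mul wA Q1)
        · refine (pow_dvd_pow _ h7).trans ?_
          rw [pow_add, mul_comm (_ ^ (eC * q))]
          exact mul_dvd_mul_left _ (wC.mul_right _)
      have wf : (1 + X) ^ (b * q) ∣ (1 + X) ^ w * (E * P - B * Q) := by
        rw [mul_sub]
        refine dvd_sub ((wE.mul_right _).mul_left _) ((pow_dvd_pow _ h5).trans ?_)
        rw [pow_add]
        exact mul_dvd_mul_left _ (Q1.mul_left _)
      have xg : X ^ (a * q) ∣ (1 + X) ^ w * (A * Q - C * P) :=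
        (dvd_sub (vA.mul_right _)
          (((pow_dvd_pow X (Nat.le_add_right _ _)).trans P1).mul_left _)).mul_left _
      obtain ⟨f, hf', df⟩ := exists_mul_of_dvd (w := m)
        ((pow_dvd_pow X (Nat.le_add_right _ _)).trans xf) wf hf (by push_cast; omega)
      obtain ⟨g, hg', dg⟩ := exists_mul_of_dvd (w := m)
        xg ((pow_dvd_pow _ (Nat.le_add_right _ _)).trans wg) hg (by push_cast; omega)
      have hfl : f + g ∈ degB F (m - l) := by
        rw [hf', hg', ← mul_add, mul_comm (X ^ (a * q) * (1 + X) ^ (b * q))] at hfg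
        have := degB_of_mul_monic (monic_XX1 (a * q) (b * q)) hfg
        rw [natDegree_XX1] at this
        exact degB_mono (by push_cast; omega) this
      have hmem : (f, g) ∈ lat F i j l m := mem_lat.2
        ⟨X_dvd_cancel (b := b * q) (k := i) (by rw [← hf']; exact xf) le_rfl,
          X1_dvd_cancel (a := a * q) (k := j) (by rw [← hg']; exact wg) le_rfl, df, dg, hfl⟩
      refine ⟨κ⁻¹ • (f, g), Submodule.smul_mem _ _ hmem, ?_⟩
      rw [map_smul, mulMat_apply]
      have hΔ := monic_XX1 (F := F) (a * q) (b * q)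
      have e1 : A * f + B * g = κ • ((1 + X) ^ w * P) := by
        apply mul_left_cancel₀ hΔ.ne_zero
        rw [smul_eq_C_mul]
        linear_combination (-A) * hf' - B * hg' + (1 + X) ^ w * P * det
      have e2 : C * f + E * g = κ • ((1 + X) ^ w * Q) := by
        apply mul_left_cancel₀ hΔ.ne_zero
        rw [smul_eq_C_mul]
        linear_combination (-C) * hf' - E * hg' + (1 + X) ^ w * Q * det
      rw [e1, e2, Prod.smul_mk, smul_smul, smul_smul, inv_mul_cancel₀ hκ, one_smul, one_smul]
  rw [← finrank_map_inj _ (mulMat_injective hdet0) (lat F i j l m), key, finrank_map_inj]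
  refine mulMat_injective ?_
  rw [zero_mul, sub_zero]
  exact mul_ne_zero hu0 hu0

end Transfer

/-! ### Transfer to the points `(aq + i, bq ± j, cq + l)` -/

section TransferPM
variable {F : Type*} [Field F]

theorem lat_succ_left {r k s : ℕ} {m : ℤ} {f h : F[X]} (hx : (f, h) ∈ lat F r k s m)
    (h' : X ^ (r + 1) ∣ f) : (f, h) ∈ lat F (r + 1) k s m :=
  mem_lat.2 ⟨h', hx.2⟩

theorem lat_succ_right {r k s e : ℕ} {m : ℤ} {f h : F[X]} (hx : (f, h) ∈ lat F r k s m)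
    (hm : m = s + e + 1) (h' : (f + h).coeff e = 0) : (f, h) ∈ lat F r k (s + 1) m := by
  obtain ⟨h1, h2, h3, h4, h5⟩ := mem_lat.1 hx
  refine mem_lat.2 ⟨h1, h2, h3, h4, fun n hn => ?_⟩
  by_cases hne : n = e
  · rw [hne, h']
  · exact h5 n (by push_cast at hn; omega)

/-- Two syzygies of degree `d` at `(a, b, c)`, one vanishing at `0` to order exactly `a` and the other
to a higher order, have determinant `κ X^a (1+X)^b` with `κ ≠ 0`: the vanishing conditions give the
divisibility, the degree bounds leave only a constant, and a zero determinant would contradict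
`lat_eq_zero`. -/
theorem frob_det (p : ℕ) [CharP F p] {a b c d : ℕ} (hsum : a + b + c = 2 * d) (hd : d ≤ p)
    (ha : a ≤ b + c) (hb : b ≤ a + c) (hc : c ≤ a + b) {A B C E : F[X]}
    (hα : (A, C) ∈ lat F a b c (d + 1)) (hA : ¬ X ^ (a + 1) ∣ A)
    (hβ : (B, E) ∈ lat F (a + 1) b c (d + 1)) (hβ0 : (B, E) ≠ 0) :
    ∃ κ : F, κ ≠ 0 ∧ A * E - B * C = Polynomial.C κ * (X ^ a * (1 + X) ^ b) := by
  obtain ⟨A1, A2, A3, A4, A5⟩ := mem_lat.1 hα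
  obtain ⟨B1, B2, B3, B4, B5⟩ := mem_lat.1 hβ
  have hdet : A * E - B * C ≠ 0 := by
    intro h0
    obtain ⟨A', rfl⟩ := A1
    obtain ⟨B', rfl⟩ := B1
    have hA' : ¬ X ∣ A' := fun h => hA (by rw [pow_succ]; exact mul_dvd_mul_left _ h)
    have h1 : A' * E = X * (B' * C) := by
      apply mul_left_cancel₀ (pow_ne_zero a (X_ne_zero (R := F)))
      linear_combination h0
    have hE : X ∣ E := (prime_X.dvd_or_dvd (Dvd.intro _ h1.symm)).resolve_left hA'
    obtain ⟨E', rfl⟩ := hE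
    have hm : ∀ {z : ℤ} {u v : F[X]}, v = u * X → v ∈ degB F z → u ∈ degB F (z - 1) := by
      rintro z u v rfl h
      have := degB_of_mul_monic monic_X h
      rwa [natDegree_X] at this
    have hl : (X ^ a * B', E') ∈ lat F a b c d := by
      refine mem_lat.2 ⟨dvd_mul_right _ _, ?_, ?_, ?_, ?_⟩
      · exact (coprime_X_X1.symm.pow_left).dvd_of_dvd_mul_left B2
      · exact degB_mono (by omega) (hm (by ring) B3)
      · exact degB_mono (by omega) (hm (by ring) B4)
      · exact degB_mono (by omega) (hm (u := X ^ a * B' + E') (by ring) B5)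
    obtain ⟨e1, e2⟩ := lat_eq_zero p hsum hd ha hb hc hl
    apply hβ0
    rw [e2, pow_succ, mul_right_comm, e1, zero_mul, mul_zero]
    rfl
  have hdeg : A * E - B * C ∈ degB F (a + b + 1) := by
    rw [show A * E - B * C = A * (B + E) - B * (A + C) by ring]
    exact sub_mem (degB_mul A3 B5 (by omega)) (degB_mul B3 A5 (by omega))
  obtain ⟨f, hf, df⟩ := exists_mul_of_dvd (a := a) (b := b) (w := 1)
    (dvd_sub (A1.mul_right _) (((pow_dvd_pow X (Nat.le_succ a)).trans B1).mul_right _))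
    (dvd_sub (B2.mul_left _) (A2.mul_left _)) hdeg (by omega)
  have hfC : f = Polynomial.C (f.coeff 0) := by
    ext n
    rw [coeff_C]
    split_ifs with h
    · rw [h]
    · exact df n (by omega)
  refine ⟨f.coeff 0, fun h0 => hdet ?_, ?_⟩
  · rw [hf, hfC, h0, C_0, mul_zero]
  · rw [hf, ← hfC, mul_comm]

/-- `transfer` with the second column supplied by `lat_exists`: it remains to choose the first column
`(A, C)`, which decides between `transfer_plus` and `transfer_minus`. -/
theorem transfer_aux (p : ℕ) [CharP F p] {q a b c d : ℕ} (hq : (1 + X : F[X]) ^ q = 1 + X ^ q)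
    (hsum : a + b + c = 2 * d) (hd : d + 1 ≤ p)
    (ha : a ≤ b + c) (hb : b ≤ a + c) (hc : c ≤ a + b) {A C : F[X]}
    (hα : (A, C) ∈ lat F a b c (d + 1)) (hA : ¬ X ^ (a + 1) ∣ A) (hAC : (A + C).coeff (d - c) ≠ 0)
    {eA eC : ℕ} (hA' : (1 + X) ^ eA ∣ A) (hC' : (1 + X) ^ eC ∣ C)
    {i j l w K : ℕ} (hi : i ≤ q) (hl : l ≤ q) (h1 : w ≤ eA * q) (h2 : w ≤ j)
    (h3 : w + K ≤ eC * q) (h4 : w + K ≤ b * q + j) (h5 : b * q ≤ w + K)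
    (h6 : b * q + j ≤ eA * q + w + K) (h7 : b * q + j ≤ eC * q + w) (m : ℤ) :
    Module.finrank F (lat F (a * q + i) K (c * q + l) (m + d * q - w)) =
      Module.finrank F (lat F i j l m) := by
  obtain ⟨B, E, hβ, hβ0⟩ := lat_exists (F := F) (a := a + 1) (b := b) (c := c) (m := d + 1)
    (by omega)
  have hBE : (B + E).coeff (d - c) ≠ 0 := by
    intro h0
    have := lat_succ_right hβ (by push_cast; omega) h0
    obtain ⟨e1, e2⟩ := lat_eq_zero p (by omega) hd (by omega) (by omega) (by omega) this
    exact hβ0 (by rw [e1, e2]; rfl)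
  push_cast at hβ
  -- rescale the first column so that both columns have the same leading coefficient at infinity
  set t : F := (B + E).coeff (d - c) / (A + C).coeff (d - c) with ht
  have ht0 : t ≠ 0 := div_ne_zero hBE hAC
  have htA : ¬ X ^ (a + 1) ∣ t • A := by
    intro h
    have := dvd_smul_of_dvd t⁻¹ h
    rw [smul_smul, inv_mul_cancel₀ ht0, one_smul] at this
    exact hA this
  have hα' : (t • A, t • C) ∈ lat F a b c (d + 1) := Submodule.smul_mem _ t hα
  obtain ⟨κ, hκ, hdet⟩ := frob_det p hsum (by omega) ha hb hc hα' htA hβ hβ0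
  obtain ⟨A1, A2, A3, A4, A5⟩ := mem_lat.1 hα'
  obtain ⟨B1, B2, B3, B4, B5⟩ := mem_lat.1 hβ
  refine transfer hq hsum hκ hdet A1 B1 B2 (dvd_smul_of_dvd t hA') (dvd_smul_of_dvd t hC')
    A3 B3 A4 B4 A5 B5 ?_ hi hl h1 h2 h3 h4 h5 h6 h7 m
  intro n hn
  by_cases hne : n = d - c
  · rw [hne, coeff_sub, ← smul_add, coeff_smul, ht, smul_eq_mul, div_mul_cancel₀ _ hAC, sub_self]
  · exact (sub_mem B5 A5) n (by omega)

/-- Transfer at `(aq + i, bq + j, cq + l)`; the first column is a syzygy at `(a, b + 1, c)`. -/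
theorem transfer_plus (p : ℕ) [CharP F p] {q a b c d : ℕ} (hq : (1 + X : F[X]) ^ q = 1 + X ^ q)
    (hsum : a + b + c = 2 * d) (hd : d + 1 ≤ p)
    (ha : a ≤ b + c) (hb : b ≤ a + c) (hc : c ≤ a + b)
    {i j l : ℕ} (hi : i ≤ q) (hj : j ≤ q) (hl : l ≤ q) (m : ℤ) :
    Module.finrank F (lat F (a * q + i) (b * q + j) (c * q + l) (m + d * q)) =
      Module.finrank F (lat F i j l m) := by
  obtain ⟨A, C, hα, hα0⟩ := lat_exists (F := F) (a := a) (b := b + 1) (c := c) (m := d + 1)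
    (by omega)
  have hA : ¬ X ^ (a + 1) ∣ A := by
    intro h0
    obtain ⟨e1, e2⟩ := lat_eq_zero p (by omega) hd (by omega) (by omega) (by omega)
      (lat_succ_left hα h0)
    exact hα0 (by rw [e1, e2]; rfl)
  have hAC : (A + C).coeff (d - c) ≠ 0 := by
    intro h0
    obtain ⟨e1, e2⟩ := lat_eq_zero p (by omega) hd (by omega) (by omega) (by omega)
      (lat_succ_right hα (by push_cast; omega) h0)
    exact hα0 (by rw [e1, e2]; rfl)
  obtain ⟨A1, A2, A3⟩ := mem_lat.1 hα
  push_cast at A3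
  have := transfer_aux p hq hsum hd ha hb hc
    (mem_lat.2 ⟨A1, (pow_dvd_pow _ (Nat.le_succ b)).trans A2, A3⟩) hA hAC
    (eA := 0) (by simp) A2 (i := i) (j := j) (l := l) (w := 0) (K := b * q + j) hi hl
    (by omega) (by omega) (by nlinarith) (by omega) (by omega) (by omega) (by nlinarith) m
  rwa [Nat.cast_zero, sub_zero] at this

/-- Transfer at `(aq + i, bq - j, cq + l)`; the first column is `1 + X` times a syzygy at
`(a, b - 1, c)`. -/
theorem transfer_minus (p : ℕ) [CharP F p] {q a b c d : ℕ} (hq : (1 + X : F[X]) ^ q = 1 + X ^ q)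
    (hsum : a + b + c = 2 * d) (hd : d + 1 ≤ p)
    (ha : a + 2 ≤ b + c) (hb : b ≤ a + c) (hc : c + 2 ≤ a + b) (hb1 : 1 ≤ b)
    {i j l : ℕ} (hi : i ≤ q) (hj : j ≤ q) (hl : l ≤ q) (m : ℤ) :
    Module.finrank F (lat F (a * q + i) (b * q - j) (c * q + l) (m + d * q - j)) =
      Module.finrank F (lat F i j l m) := by
  obtain ⟨b, rfl⟩ : ∃ b', b = b' + 1 := ⟨b - 1, by omega⟩
  obtain ⟨A, C, hα, hα0⟩ := lat_exists (F := F) (a := a) (b := b) (c := c) (m := d)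
    (by omega)
  have hA : ¬ X ^ (a + 1) ∣ A := by
    intro h0
    obtain ⟨e1, e2⟩ := lat_eq_zero p (by omega) (by omega) (by omega) (by omega) (by omega)
      (lat_succ_left hα h0)
    exact hα0 (by rw [e1, e2]; rfl)
  have hAC : (A + C).coeff (d - c - 1) ≠ 0 := by
    intro h0
    obtain ⟨e1, e2⟩ := lat_eq_zero p (by omega) (by omega) (by omega) (by omega) (by omega)
      (lat_succ_right hα (by omega) h0)
    exact hα0 (by rw [e1, e2]; rfl)
  obtain ⟨A1, A2, A3, A4, A5⟩ := mem_lat.1 hα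
  have d1 : (1 + X : F[X]) ∈ degB F 2 := mem_degB_iff.2 (Or.inr (by
    have := natDegree_X1 (F := F) 1
    rw [pow_one] at this
    omega))
  have hα' : ((1 + X) * A, (1 + X) * C) ∈ lat F a (b + 1) c (d + 1) := by
    refine mem_lat.2 ⟨A1.mul_left _, ?_, degB_mul d1 A3 (by omega), degB_mul d1 A4 (by omega), ?_⟩
    · rw [pow_succ']; exact mul_dvd_mul_left _ A2
    · rw [← mul_add]; exact degB_mul d1 A5 (by omega)
  have hK : j ≤ (b + 1) * q := by nlinarith
  refine transfer_aux p hq hsum hd (by omega) (by omega) (by omega) hα' ?_ ?_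
    (eA := 1) (eC := b + 1) (by simp) ?_ (i := i) (j := j) (l := l) (w := j)
    (K := (b + 1) * q - j) hi hl
    (by omega) (by omega) (by omega) (by omega) (by omega) (by omega) (by omega) m
  · exact fun h => hA ((coprime_X_X1.pow_left).dvd_of_dvd_mul_left h)
  · rw [← mul_add, show d - c = d - c - 1 + 1 by omega, add_mul, one_mul, coeff_add, coeff_X_mul,
      A5 (d - c - 1 + 1) (by omega), zero_add]
    exact hAC
  · rw [pow_succ']; exact mul_dvd_mul_left _ A2

end TransferPM

/-! ### Syzygies and graded kernels of `(x + y)^k` -/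

section Grading
variable {F : Type*} [Field F]

/-- Polynomials whose exponents lie in the finite set `A`. -/
def suppS (F : Type*) [Field F] (A : Finset ℕ) : Submodule F F[X] where
  carrier := {p | ∀ n, n ∉ A → p.coeff n = 0}
  add_mem' := fun {p q} hp hq n hn => by rw [coeff_add, hp n hn, hq n hn, add_zero]
  zero_mem' := fun n _ => coeff_zero n
  smul_mem' := fun c p hp n hn => by rw [coeff_smul, hp n hn, smul_zero]

/-- The part of a polynomial with exponents in `A`. -/
noncomputable def resS (F : Type*) [Field F] (A : Finset ℕ) : F[X] →ₗ[F] F[X] :=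
  ∑ i ∈ A, monomial i ∘ₗ lcoeff F i

theorem coeff_resS (A : Finset ℕ) (p : F[X]) (n : ℕ) :
    (resS F A p).coeff n = if n ∈ A then p.coeff n else 0 := by
  simp only [resS, LinearMap.sum_apply, LinearMap.comp_apply, lcoeff_apply, finsetSum_coeff,
    coeff_monomial]
  rw [Finset.sum_ite_eq' A n]

theorem resS_mem (A : Finset ℕ) (p : F[X]) : resS F A p ∈ suppS F A := fun n hn => by
  rw [coeff_resS, if_neg hn]

/-- Coordinates on `suppS F A`. -/
noncomputable def suppSEquiv (A : Finset ℕ) : suppS F A ≃ₗ[F] (A → F) where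
  toFun p i := (p : F[X]).coeff i
  map_add' p q := by ext; simp
  map_smul' c p := by ext; simp
  invFun v := ⟨∑ i : A, monomial (i : ℕ) (v i), fun n hn => by
    rw [finsetSum_coeff]
    refine Finset.sum_eq_zero fun i _ => ?_
    rw [coeff_monomial, if_neg]
    rintro rfl
    exact hn i.2⟩
  left_inv p := by
    ext n
    simp only [finsetSum_coeff, coeff_monomial]
    by_cases hn : n ∈ A
    · rw [Finset.sum_eq_single ⟨n, hn⟩]
      · simp
      · intro b _ hb
        rw [if_neg]
        rintro rfl
        exact hb rfl
      · simp
    · rw [p.2 n hn]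
      refine Finset.sum_eq_zero fun i _ => ?_
      rw [if_neg]
      rintro rfl
      exact hn i.2
  right_inv v := by
    ext j
    simp only [finsetSum_coeff, coeff_monomial]
    rw [Finset.sum_eq_single j]
    · simp
    · intro b _ hb
      rw [if_neg]
      exact fun h => hb (Subtype.ext h)
    · simp

instance finite_suppS (A : Finset ℕ) : Module.Finite F (suppS F A) :=
  Module.Finite.equiv (suppSEquiv A).symm

theorem finrank_suppS (A : Finset ℕ) : Module.finrank F (suppS F A) = A.card := by
  rw [(suppSEquiv A).finrank_eq]; simp

/-- The exponents of `x` in the monomials `x^i y^(e-i)` with `i < r`, `e - i < s`. -/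
def expS (r s e : ℕ) : Finset ℕ := (Finset.range (e + 1)).filter fun i => i < r ∧ e < i + s

/-- The exponents excluded from `expS`. -/
def expA (r s e : ℕ) : Finset ℕ := (Finset.range (e + 1)).filter fun i => ¬ (i < r ∧ e < i + s)

/-- The kernel of `(x + y)^k` on the degree-`e` part of `F[x, y] / (x^r, y^s)`, dehomogenised at
`y = 1`. -/
def kerE (F : Type*) [Field F] (r s k e : ℕ) : Submodule F F[X] where
  carrier := {h : F[X] | h ∈ suppS F (expS r s e) ∧
    ∀ i, i < r → e + k < i + s → coeff ((1 + X) ^ k * h) i = 0}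
  add_mem' := fun {p q} hp hq => ⟨add_mem hp.1 hq.1, fun i hi hi' => by
    rw [mul_add, coeff_add, hp.2 i hi hi', hq.2 i hi hi', add_zero]⟩
  zero_mem' := ⟨zero_mem _, fun i _ _ => by simp⟩
  smul_mem' := fun c p hp => ⟨Submodule.smul_mem _ c hp.1, fun i hi hi' => by
    rw [mul_smul_comm, coeff_smul, hp.2 i hi hi', smul_zero]⟩

theorem mem_kerE {r s k e : ℕ} {h : F[X]} : h ∈ kerE F r s k e ↔ h ∈ suppS F (expS r s e) ∧
    ∀ i, i < r → e + k < i + s → ((1 + X) ^ k * h).coeff i = 0 := Iff.rfl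

instance finite_kerE (r s k e : ℕ) : Module.Finite F (kerE F r s k e) :=
  Module.Finite.of_injective (Submodule.inclusion (p := kerE F r s k e)
    (p' := suppS F (expS r s e)) fun _ h => h.1) (Submodule.inclusion_injective _)

theorem suppS_degB {A : Finset ℕ} {z : ℤ} (h : ∀ n ∈ A, (n : ℤ) < z) {p : F[X]}
    (hp : p ∈ suppS F A) : p ∈ degB F z := fun n hn => hp n fun hA => by
  have := h n hA
  omega

theorem X1_mem_degB (k : ℕ) : (1 + X : F[X]) ^ k ∈ degB F (k + 1) :=
  mem_degB_iff.2 (Or.inr (by rw [natDegree_X1]; omega))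

/-- In the degree of interest a syzygy amounts to an element of the kernel of `(x + y)^k` together
with trivial choices. -/
theorem finrank_lat_eq (r k s e : ℕ) : Module.finrank F (lat F r k s ((e + 1 + k : ℕ) : ℤ)) =
    Module.finrank F (kerE F r s k e) + (expA r s e).card + (e + 1 + k - r - s) := by
  let B := Finset.Ico r (e + 1 + k - s)
  let T := Finset.Ico r (e + 1 + k)
  let ψ2 : (kerE F r s k e × suppS F (expA r s e)) × suppS F B →ₗ[F] F[X] :=
    LinearMap.mulLeft F ((1 + X) ^ k) ∘ₗ
      ((kerE F r s k e).subtype.coprod (suppS F (expA r s e)).subtype) ∘ₗ LinearMap.fst F _ _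
  let ψ1 : (kerE F r s k e × suppS F (expA r s e)) × suppS F B →ₗ[F] F[X] :=
    (suppS F B).subtype ∘ₗ LinearMap.snd F _ _ - resS F T ∘ₗ ψ2
  have hψ2 : ∀ (h1 : kerE F r s k e) (h2 : suppS F (expA r s e)) (f : suppS F B), ψ2 ((h1, h2), f) = (1 + X) ^ k * ((h1 : F[X]) + (h2 : F[X])) := fun _ _ _ => rfl
  have hψ1 : ∀ (h1 : kerE F r s k e) (h2 : suppS F (expA r s e)) (f : suppS F B), ψ1 ((h1, h2), f) = f - resS F T ((1 + X) ^ k * ((h1 : F[X]) + (h2 : F[X]))) :=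
    fun _ _ _ => rfl
  have hdegA : ∀ h ∈ suppS F (expA r s e), h ∈ degB F (e + 1) := fun h hh =>
    suppS_degB (fun n hn => by simp only [expA, Finset.mem_filter, Finset.mem_range] at hn; omega) hh
  have hdegK : ∀ h ∈ kerE F r s k e, h ∈ degB F (e + 1) := fun h hh =>
    suppS_degB (fun n hn => by simp only [expS, Finset.mem_filter, Finset.mem_range] at hn; omega)
      hh.1
  -- multiples of `x^r` or `y^s` contribute nothing to the relevant coefficients
  have hA0 : ∀ h ∈ suppS F (expA r s e), ∀ i, i < r → e + k < i + s →
      ((1 + X) ^ k * h).coeff i = 0 := by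
    intro h hh i hi hi'
    rw [coeff_mul]
    refine Finset.sum_eq_zero fun x hx => ?_
    rw [Finset.HasAntidiagonal.mem_antidiagonal] at hx
    by_cases hk : k < x.1
    · rw [X1_mem_degB k x.1 (by omega), zero_mul]
    · rw [hh x.2, mul_zero]
      simp only [expA, Finset.mem_filter, Finset.mem_range]
      omega
  have hmem : ∀ x, (ψ1 x, ψ2 x) ∈ lat F r k s ((e + 1 + k : ℕ) : ℤ) := by
    rintro ⟨⟨⟨h1, m1⟩, ⟨h2, m2⟩⟩, ⟨f, m3⟩⟩
    rw [hψ1, hψ2]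
    have hg : (1 + X) ^ k * (h1 + h2) ∈ degB F ((e + 1 + k : ℕ) : ℤ) :=
      degB_mul (X1_mem_degB k) (add_mem (hdegK _ m1) (hdegA _ m2)) (by push_cast; omega)
    refine mem_lat.2 ⟨?_, dvd_mul_right _ _, ?_, hg, ?_⟩
    · rw [X_pow_dvd_iff]
      intro n hn
      rw [coeff_sub, coeff_resS, if_neg (by simp [T]; omega), sub_zero]
      exact m3 n (by simp [B]; omega)
    · refine sub_mem (suppS_degB (fun n hn => ?_) m3) (suppS_degB (fun n hn => ?_) (resS_mem T _))
      · simp [B] at hn; omega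
      · simp [T] at hn; omega
    · intro n hn
      have e1 : f.coeff n = 0 := m3 n (by simp [B]; omega)
      rw [coeff_add, coeff_sub, coeff_resS, e1]
      split_ifs with hT
      · ring
      · by_cases hr : n < r
        · rw [mul_add, coeff_add, m1.2 n hr (by omega), hA0 h2 m2 n hr (by omega)]; ring
        · rw [hg n (by simp [T] at hT; omega)]; ring
  let Ψ : (kerE F r s k e × suppS F (expA r s e)) × suppS F B →ₗ[F]
      lat F r k s ((e + 1 + k : ℕ) : ℤ) := (ψ1.prod ψ2).codRestrict _ hmem
  have hΨ : Function.Bijective Ψ := by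
    constructor
    · rw [← LinearMap.ker_eq_bot, LinearMap.ker_eq_bot']
      rintro ⟨⟨⟨h1, m1⟩, ⟨h2, m2⟩⟩, ⟨f, m3⟩⟩ h0
      have h0' : (ψ1 ((⟨h1, m1⟩, ⟨h2, m2⟩), ⟨f, m3⟩), ψ2 ((⟨h1, m1⟩, ⟨h2, m2⟩), ⟨f, m3⟩)) = 0 :=
        congrArg Subtype.val h0
      rw [hψ1, hψ2, Prod.mk_eq_zero] at h0'
      obtain ⟨e1, e2⟩ := h0'
      have e3 := (mul_eq_zero.1 e2).resolve_left (monic_X1 k).ne_zero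
      simp only at e3
      have e4 : f = 0 := by rw [e2, map_zero, sub_zero] at e1; exact e1
      have e5 : h1 = 0 := by
        ext n
        by_cases hn : n ∈ expS r s e
        · have h2n : h2.coeff n = 0 := m2 n (by
            simp only [expS, expA, Finset.mem_filter] at hn ⊢; tauto)
          have := congrArg (fun u => coeff u n) e3
          simp only [coeff_add, h2n, add_zero] at this
          exact this
        · rw [m1.1 n hn, coeff_zero]
      have e6 : h2 = 0 := by rwa [e5, zero_add] at e3
      subst e4 e5 e6
      rfl
    · rintro ⟨⟨f, g⟩, hfg⟩
      obtain ⟨l1, ⟨h, rfl⟩, l3, l4, l5⟩ := mem_lat.1 hfg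
      have hh : h ∈ degB F (e + 1) := by
        rw [mul_comm] at l4
        have := degB_of_mul_monic (monic_X1 k) l4
        rw [natDegree_X1] at this
        exact degB_mono (by push_cast; omega) this
      have hsplit : resS F (expS r s e) h + resS F (expA r s e) h = h := by
        ext n
        rw [coeff_add, coeff_resS, coeff_resS]
        simp only [expS, expA, Finset.mem_filter, Finset.mem_range]
        by_cases hn : n < e + 1
        · by_cases hc : n < r ∧ e < n + s <;> simp [hn, hc]
        · rw [hh n (by omega)]; simp
      have hg0 : ∀ i, i < r → e + k < i + s → ((1 + X) ^ k * h).coeff i = 0 := by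
        intro i hi hi'
        have := l5 i (by push_cast; omega)
        rwa [coeff_add, X_pow_dvd_iff.1 l1 i hi, zero_add] at this
      have m1 : resS F (expS r s e) h ∈ kerE F r s k e := by
        refine mem_kerE.2 ⟨resS_mem _ _, fun i hi hi' => ?_⟩
        have := hg0 i hi hi'
        rwa [← hsplit, mul_add, coeff_add, hA0 _ (resS_mem _ _) i hi hi', add_zero] at this
      have m3 : f + resS F T ((1 + X) ^ k * h) ∈ suppS F B := by
        intro n hn
        simp only [B, Finset.mem_Ico] at hn
        rw [coeff_add, coeff_resS]
        by_cases hr : n < r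
        · rw [X_pow_dvd_iff.1 l1 n hr, if_neg (by simp [T]; omega), add_zero]
        · split_ifs with hT
          · have := l5 n (by push_cast; omega)
            rwa [coeff_add] at this
          · rw [l3 n (by simp [T] at hT; omega), add_zero]
      refine ⟨((⟨_, m1⟩, ⟨_, resS_mem (expA r s e) h⟩), ⟨_, m3⟩), Subtype.ext ?_⟩
      change (ψ1 _, ψ2 _) = _
      rw [hψ1, hψ2]
      simp only [hsplit, add_sub_cancel_right]
  rw [← (LinearEquiv.ofBijective Ψ hΨ).finrank_eq, Module.finrank_prod, Module.finrank_prod,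
    finrank_suppS, finrank_suppS, Nat.card_Ico]
  omega

/-- In low degrees the only syzygies are the multiples of the one between `x^r` and `y^s`. -/
theorem finrank_lat_low {r k s x : ℕ} (hx : x ≤ k) :
    Module.finrank F (lat F r k s (x : ℤ)) = x - r - s := by
  have hmem : ∀ f : suppS F (Finset.Ico r (x - s)), ((f : F[X]), (0 : F[X])) ∈ lat F r k s x := by
    rintro ⟨f, hf⟩
    have hd : f ∈ degB F (x - s) := suppS_degB (fun n hn => by simp at hn; omega) hf
    refine mem_lat.2 ⟨?_, dvd_zero _, degB_mono (by omega) hd, zero_mem _, by simpa using hd⟩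
    rw [X_pow_dvd_iff]
    exact fun n hn => hf n (by simp; omega)
  let Ψ : suppS F (Finset.Ico r (x - s)) →ₗ[F] lat F r k s x :=
    (LinearMap.prod (suppS F _).subtype 0).codRestrict _ hmem
  have hΨ : Function.Bijective Ψ := by
    constructor
    · intro f g hfg
      have := congrArg (fun u : lat F r k s x => (u : F[X] × F[X]).1) hfg
      exact Subtype.ext this
    · rintro ⟨⟨f, g⟩, hfg⟩
      obtain ⟨l1, l2, l3, l4, l5⟩ := mem_lat.1 hfg
      have g0 := degB_eq_zero_of_dvd (monic_X1 k) l2 l4 (by rw [natDegree_X1]; omega)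
      subst g0
      rw [add_zero] at l5
      refine ⟨⟨f, fun n hn => ?_⟩, rfl⟩
      by_cases hr : n < r
      · exact X_pow_dvd_iff.1 l1 n hr
      · exact l5 n (by simp at hn; omega)
  rw [← (LinearEquiv.ofBijective Ψ hΨ).finrank_eq, finrank_suppS, Nat.card_Ico]
  omega

theorem card_expA (r s e : ℕ) :
    (expA r s e).card + (e + 1 - r - s) = (e + 1 - s) + (e + 1 - r) := by
  have h1 : expA r s e = Finset.range (e + 1 - s) ∪ Finset.Ico r (e + 1) := by
    ext n
    simp only [expA, Finset.mem_filter, Finset.mem_range, Finset.mem_union, Finset.mem_Ico]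
    omega
  have h2 : Finset.range (e + 1 - s) ∩ Finset.Ico r (e + 1) = Finset.Ico r (e + 1 - s) := by
    ext n
    simp only [Finset.mem_range, Finset.mem_inter, Finset.mem_Ico]
    omega
  have := Finset.card_union_add_card_inter (Finset.range (e + 1 - s)) (Finset.Ico r (e + 1))
  rw [← h1, h2] at this
  simp only [Nat.card_Ico, Finset.card_range] at this
  omega

end Grading

/-! ### Multiplication by `x + y` on `F[x, y] / (x^r, y^s)` -/

section Raise
variable {F : Type*} [Field F]

/-- Multiplication by `x + y` on `F[x, y] / (x^r, y^s)`, in the monomial basis. -/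
def raiseN (F : Type*) [Field F] (r s : ℕ) : Module.End F (Fin r × Fin s → F) where
  toFun v x :=
    (if 0 < (x.1 : ℕ) then v (⟨x.1 - 1, by omega⟩, x.2) else 0) +
    (if 0 < (x.2 : ℕ) then v (x.1, ⟨x.2 - 1, by omega⟩) else 0)
  map_add' v w := by
    ext x
    simp only [Pi.add_apply]
    split_ifs <;> ring
  map_smul' c v := by
    ext x
    simp only [Pi.smul_apply, smul_eq_mul, RingHom.id_apply]
    split_ifs <;> ring

theorem raiseN_apply (r s : ℕ) (v : Fin r × Fin s → F) (i j : ℕ) (hi : i < r) (hj : j < s) :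
    raiseN F r s v (⟨i, hi⟩, ⟨j, hj⟩) =
      (if 0 < i then v (⟨i - 1, by omega⟩, ⟨j, hj⟩) else 0) +
      (if 0 < j then v (⟨i, hi⟩, ⟨j - 1, by omega⟩) else 0) := rfl

/-- The coefficient of `x^i y^j`, read as `0` outside the monomial basis. -/
def extL (F : Type*) [Field F] (r s i j : ℕ) : (Fin r × Fin s → F) →ₗ[F] F :=
  if h : i < r ∧ j < s then LinearMap.proj (⟨i, h.1⟩, ⟨j, h.2⟩) else 0

theorem extL_of_lt {r s i j : ℕ} (hi : i < r) (hj : j < s) (v : Fin r × Fin s → F) :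
    extL F r s i j v = v (⟨i, hi⟩, ⟨j, hj⟩) := by
  rw [extL, dif_pos ⟨hi, hj⟩]; rfl

theorem extL_of_not {r s i j : ℕ} (h : ¬ (i < r ∧ j < s)) (v : Fin r × Fin s → F) :
    extL F r s i j v = 0 := by
  rw [extL, dif_neg h]; rfl

/-- The degree-`e` component, dehomogenised at `y = 1`. -/
noncomputable def hP (F : Type*) [Field F] (r s e : ℕ) : (Fin r × Fin s → F) →ₗ[F] F[X] :=
  ∑ i ∈ Finset.range (e + 1), monomial i ∘ₗ extL F r s i (e - i)

theorem coeff_hP (r s e : ℕ) (v : Fin r × Fin s → F) (n : ℕ) :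
    (hP F r s e v).coeff n = if n ≤ e then extL F r s n (e - n) v else 0 := by
  simp only [hP, LinearMap.sum_apply, LinearMap.comp_apply, finsetSum_coeff, coeff_monomial]
  rw [Finset.sum_ite_eq' (Finset.range (e + 1)) n]
  simp only [Finset.mem_range, Nat.lt_succ_iff]

theorem hP_mem (r s e : ℕ) (v : Fin r × Fin s → F) : hP F r s e v ∈ suppS F (expS r s e) := by
  intro n hn
  rw [coeff_hP]
  split_ifs with h
  · refine extL_of_not (fun h' => hn ?_) v
    simp only [expS, Finset.mem_filter, Finset.mem_range]
    omega
  · rfl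

theorem hP_deg (r s e k : ℕ) (v : Fin r × Fin s → F) :
    (1 + X) ^ k * hP F r s e v ∈ degB F (e + k + 1) := by
  refine degB_mul (X1_mem_degB k) (w := e + 1) ?_ (by omega)
  refine suppS_degB (fun n hn => ?_) (hP_mem r s e v)
  simp only [expS, Finset.mem_filter, Finset.mem_range] at hn
  omega

theorem raiseN_pow (r s k : ℕ) (v : Fin r × Fin s → F) (i j : ℕ) (hi : i < r) (hj : j < s) :
    (raiseN F r s ^ k) v (⟨i, hi⟩, ⟨j, hj⟩) =
      if k ≤ i + j then ((1 + X) ^ k * hP F r s (i + j - k) v).coeff i else 0 := by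
  induction k generalizing i j with
  | zero =>
    rw [if_pos (Nat.zero_le _), pow_zero, pow_zero, one_mul, coeff_hP, if_pos (by omega),
      Nat.sub_zero, Nat.add_sub_cancel_left, extL_of_lt hi hj]
    rfl
  | succ k ih =>
    rw [pow_succ', Module.End.mul_apply]
    rw [raiseN_apply]
    by_cases hk : k + 1 ≤ i + j
    · rw [if_pos hk, pow_succ', mul_assoc, add_mul, one_mul, coeff_add]
      rcases Nat.eq_zero_or_pos i with rfl | hi0
      · rw [if_neg (lt_irrefl 0), if_pos (by omega), ih, if_pos (by omega),
          show 0 + (j - 1) - k = 0 + j - (k + 1) by omega]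
        simp
      · obtain ⟨i, rfl⟩ : ∃ i', i = i' + 1 := ⟨i - 1, by omega⟩
        rw [if_pos (by omega), coeff_X_mul, ih, if_pos (by omega),
          show i + 1 - 1 + j - k = i + 1 + j - (k + 1) by omega]
        rcases Nat.eq_zero_or_pos j with rfl | hj0
        · rw [if_neg (lt_irrefl 0), hP_deg r s _ k v (i + 1) (by omega)]
          simp
        · rw [if_pos hj0, ih, if_pos (by omega),
            show i + 1 + (j - 1) - k = i + 1 + j - (k + 1) by omega, add_comm]
          rfl
    · rw [if_neg hk]
      split_ifs with h1 h2 h2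
      · rw [ih, ih, if_neg (by omega), if_neg (by omega), add_zero]
      · rw [ih, if_neg (by omega), add_zero]
      · rw [ih, if_neg (by omega), add_zero]
      · rw [add_zero]

theorem mem_ker_raiseN_pow {r s k : ℕ} {v : Fin r × Fin s → F} :
    v ∈ LinearMap.ker (raiseN F r s ^ k) ↔ ∀ e, hP F r s e v ∈ kerE F r s k e := by
  rw [LinearMap.mem_ker]
  constructor
  · intro h e
    refine mem_kerE.2 ⟨hP_mem _ _ _ _, fun i hi hi' => ?_⟩
    by_cases hik : i ≤ e + k
    · have := congrFun h (⟨i, hi⟩, ⟨e + k - i, by omega⟩)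
      rw [raiseN_pow, if_pos (by omega), show i + (e + k - i) - k = e by omega] at this
      exact this
    · exact hP_deg r s e k v i (by omega)
  · intro h
    ext ⟨⟨i, hi⟩, ⟨j, hj⟩⟩
    rw [raiseN_pow]
    split_ifs with hk
    · exact (h (i + j - k)).2 i hi (by omega)
    · rfl

/-- The kernel of `(x + y)^k` is the direct sum of its graded pieces. -/
theorem finrank_ker_raiseN_pow {r s k E : ℕ} (hE : r + s ≤ E) :
    Module.finrank F (LinearMap.ker (raiseN F r s ^ k)) =
      ∑ e ∈ Finset.range E, Module.finrank F (kerE F r s k e) := by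
  let Ψ : LinearMap.ker (raiseN F r s ^ k) →ₗ[F] ((e : Fin E) → kerE F r s k e) :=
    LinearMap.pi fun e => ((hP F r s e) ∘ₗ (LinearMap.ker (raiseN F r s ^ k)).subtype).codRestrict
      (kerE F r s k e) fun v => mem_ker_raiseN_pow.1 v.2 e
  have hΨ : Function.Bijective Ψ := by
    constructor
    · rw [← LinearMap.ker_eq_bot, LinearMap.ker_eq_bot']
      rintro ⟨v, hv⟩ h0
      apply Subtype.ext
      ext ⟨⟨i, hi⟩, ⟨j, hj⟩⟩
      have h1 : hP F r s (i + j) v = 0 := congrArg Subtype.val (congrFun h0 ⟨i + j, by omega⟩)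
      have h2 := coeff_hP r s (i + j) v i
      rw [h1, if_pos (by omega), Nat.add_sub_cancel_left, extL_of_lt hi hj, coeff_zero] at h2
      exact h2.symm
    · intro w
      let v : Fin r × Fin s → F := fun x => (w ⟨x.1 + x.2, by omega⟩ : F[X]).coeff x.1
      have hv : ∀ e : Fin E, hP F r s e v = w e := by
        intro e
        ext n
        rw [coeff_hP]
        by_cases hn : n ∈ expS r s e
        · simp only [expS, Finset.mem_filter, Finset.mem_range] at hn
          rw [if_pos (by omega), extL_of_lt hn.2.1 (show e - n < s by omega)]
          simp only [v]
          have he : (⟨n + (e - n), by omega⟩ : Fin E) = e := Fin.ext (by simp only; omega)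
          exact congrArg (fun u : Fin E => (w u : F[X]).coeff n) he
        · rw [(w e).2.1 n hn]
          split_ifs
          · refine extL_of_not (fun h' => hn ?_) v
            simp only [expS, Finset.mem_filter, Finset.mem_range]
            omega
          · rfl
      refine ⟨⟨v, mem_ker_raiseN_pow.2 fun e => ?_⟩, ?_⟩
      · by_cases he : e < E
        · have := hv ⟨e, he⟩
          simp only at this
          rw [this]
          exact (w ⟨e, he⟩).2
        · have : hP F r s e v = 0 := by
            ext n
            rw [hP_mem r s e v n, coeff_zero]
            simp only [expS, Finset.mem_filter, Finset.mem_range]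
            omega
          rw [this]
          exact zero_mem _
      · ext1 e
        exact Subtype.ext (hv e)
  rw [(LinearEquiv.ofBijective Ψ hΨ).finrank_eq, Module.finrank_pi_fintype,
    Finset.sum_range (fun e => Module.finrank F (kerE F r s k e))]

theorem sum_trunc (c y : ℕ) : 2 * ∑ e ∈ Finset.range (c + y), (e + 1 - c) = y * (y + 1) := by
  induction y with
  | zero =>
    rw [Finset.sum_eq_zero]
    · simp
    · intro x hx
      rw [Finset.mem_range] at hx
      omega
  | succ y ih =>
    rw [← add_assoc, Finset.sum_range_succ, mul_add, ih]
    rw [show c + y + 1 - c = y + 1 by omega]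
    ring

/-- The dimension of `ker (x + y)^k` through the Hilbert function of the syzygies. -/
theorem finrank_ker_formula (r s k y : ℕ) :
    2 * Module.finrank F (LinearMap.ker (raiseN F r s ^ k)) + (r + y) * (r + y + 1) +
      (s + y) * (s + y + 1) + (k + y) * (k + y + 1) =
    2 * ∑ x ∈ Finset.range (r + s + y + k), Module.finrank F (lat F r k s ((x + 1 : ℕ) : ℤ)) +
      y * (y + 1) := by
  have h1 : ∑ x ∈ Finset.range (r + s + y + k), Module.finrank F (lat F r k s ((x + 1 : ℕ) : ℤ)) =
      ∑ x ∈ Finset.range k, (x + 1 - (r + s)) + ∑ e ∈ Finset.range (r + s + y),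
        (Module.finrank F (kerE F r s k e) + (expA r s e).card + (k + e + 1 - (r + s))) := by
    rw [add_comm _ k, Finset.sum_range_add]
    congr 1
    · refine Finset.sum_congr rfl fun x hx => ?_
      rw [Finset.mem_range] at hx
      rw [finrank_lat_low (by omega)]
      omega
    · refine Finset.sum_congr rfl fun e _ => ?_
      rw [show k + e + 1 = e + 1 + k by omega, finrank_lat_eq]
      omega
  have h2 : ∑ x ∈ Finset.range k, (x + 1 - (r + s)) +
      ∑ e ∈ Finset.range (r + s + y), (k + e + 1 - (r + s)) =
        ∑ x ∈ Finset.range (r + s + (k + y)), (x + 1 - (r + s)) := by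
    rw [show r + s + (k + y) = k + (r + s + y) by omega,
      Finset.sum_range_add (fun x => x + 1 - (r + s)) k (r + s + y)]
  have h3 : ∑ e ∈ Finset.range (r + s + y), (expA r s e).card +
      ∑ e ∈ Finset.range (r + s + y), (e + 1 - (r + s)) =
      ∑ e ∈ Finset.range (s + (r + y)), (e + 1 - s) +
      ∑ e ∈ Finset.range (r + (s + y)), (e + 1 - r) := by
    rw [show s + (r + y) = r + s + y by omega, show r + (s + y) = r + s + y by omega,
      ← Finset.sum_add_distrib, ← Finset.sum_add_distrib]
    refine Finset.sum_congr rfl fun e _ => ?_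
    have := card_expA r s e
    omega
  have e1 := sum_trunc (r + s) (k + y)
  have e2 := sum_trunc (r + s) y
  have e3 := sum_trunc s (r + y)
  have e4 := sum_trunc r (s + y)
  rw [Finset.sum_add_distrib, Finset.sum_add_distrib] at h1
  rw [h1, finrank_ker_raiseN_pow (E := r + s + y) (by omega)]
  omega

end Raise

/-! ### Kernel dimensions in the middle range -/

section KDim
variable {F : Type*} [Field F]

/-- The dimension of the kernel of `(x + y)^k` on `F[x, y] / (x^r, y^s)`. -/
noncomputable def kdim (F : Type*) [Field F] (r s k : ℕ) : ℕ :=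
  Module.finrank F (LinearMap.ker (raiseN F r s ^ k))

theorem finrank_lat_nonpos {r k s : ℕ} {m : ℤ} (hm : m ≤ 0) :
    Module.finrank F (lat F r k s m) = 0 := by
  have : lat F r k s m = ⊥ := by
    rw [eq_bot_iff]
    rintro ⟨f, h⟩ hx
    obtain ⟨_, _, h3, h4, _⟩ := mem_lat.1 hx
    rw [degB_nonpos h3 hm, degB_nonpos h4 hm]
    exact zero_mem _
  rw [this, finrank_bot]

theorem sum_shift {f g : ℤ → ℕ} {D : ℕ} (h : ∀ m : ℤ, f (m + D) = g m)
    (hg : ∀ m : ℤ, m ≤ 0 → g m = 0) (H : ℕ) :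
    ∑ x ∈ Finset.range (D + H), f ((x + 1 : ℕ) : ℤ) =
      ∑ x ∈ Finset.range H, g ((x + 1 : ℕ) : ℤ) := by
  rw [Finset.sum_range_add, Finset.sum_eq_zero, zero_add]
  · refine Finset.sum_congr rfl fun x _ => ?_
    rw [← h]
    congr 1
    push_cast
    ring
  · intro x hx
    rw [Finset.mem_range] at hx
    have := h ((x + 1 : ℕ) - D)
    rw [sub_add_cancel] at this
    rw [this, hg _ (by push_cast; omega)]

/-- Summing `transfer_plus` at `(r₀, s₀ - r₀ + 2i, s₀)` over all degrees. -/
theorem kdim_plus (p : ℕ) [CharP F p] {q : ℕ} (hq : (1 + X : F[X]) ^ q = 1 + X ^ q)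
    {r0 s0 i : ℕ} (h0 : r0 ≤ s0) (hi : i ≤ r0) (hp : s0 + i + 1 ≤ p)
    {r1 s1 j : ℕ} (hr : r1 ≤ q) (hs : s1 ≤ q) (hj : j ≤ q) :
    (kdim F (r0 * q + r1) (s0 * q + s1) ((s0 - r0 + 2 * i) * q + j) : ℤ) =
      kdim F r1 s1 j + q ^ 2 * (r0 * s0 - (r0 - i) ^ 2) + q * (r1 * (s0 - r0 + i) + s1 * i) +
        q * (r0 - i) * j := by
  have ht := sum_shift (D := (s0 + i) * q)
    (f := fun m => Module.finrank F (lat F (r0 * q + r1) ((s0 - r0 + 2 * i) * q + j) (s0 * q + s1) m))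
    (g := fun m => Module.finrank F (lat F r1 j s1 m))
    (fun m => by
      have := transfer_plus (F := F) p hq (a := r0) (b := s0 - r0 + 2 * i) (c := s0) (d := s0 + i)
        (by omega) (by omega) (by omega) (by omega) (by omega) hr hj hs m
      rw [← this]
      push_cast
      rfl)
    (fun m hm => finrank_lat_nonpos hm) (r1 + s1 + (s0 + i) * q + j)
  have hb := finrank_ker_formula (F := F) (r0 * q + r1) (s0 * q + s1) ((s0 - r0 + 2 * i) * q + j) 0
  have hs := finrank_ker_formula (F := F) r1 s1 j ((s0 + i) * q)
  rw [← kdim] at hb hs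
  have hrange : r0 * q + r1 + (s0 * q + s1) + 0 + ((s0 - r0 + 2 * i) * q + j) =
      (s0 + i) * q + (r1 + s1 + (s0 + i) * q + j) := by
    zify [h0]
    ring
  rw [hrange, ht] at hb
  zify [h0] at hb hs ⊢
  have h2 : (2 : ℤ) ≠ 0 := two_ne_zero
  apply mul_left_cancel₀ h2
  linear_combination hb - hs

/-- Summing `transfer_minus` at `(r₀, s₀ - r₀ + 2i, s₀)` over all degrees. -/
theorem kdim_minus (p : ℕ) [CharP F p] {q : ℕ} (hq : (1 + X : F[X]) ^ q = 1 + X ^ q)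
    {r0 s0 i : ℕ} (h0 : r0 ≤ s0) (hi : i ≤ r0) (hi1 : 1 ≤ i) (hp : s0 + i + 1 ≤ p)
    {r1 s1 j : ℕ} (hr : r1 ≤ q) (hs : s1 ≤ q) (hj : j ≤ q) :
    (kdim F (r0 * q + r1) (s0 * q + s1) ((s0 - r0 + 2 * i) * q - j) : ℤ) =
      kdim F r1 s1 j - (r1 + s1) * j + q ^ 2 * (r0 * s0 - (r0 - i) ^ 2) +
        q * (r1 * (s0 - r0 + i) + s1 * i) - q * (r0 - i) * j := by
  have hjD : j ≤ (s0 + i) * q := by nlinarith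
  have hjk : j ≤ (s0 - r0 + 2 * i) * q := by nlinarith
  have ht := sum_shift (D := (s0 + i) * q - j)
    (f := fun m => Module.finrank F (lat F (r0 * q + r1) ((s0 - r0 + 2 * i) * q - j) (s0 * q + s1) m))
    (g := fun m => Module.finrank F (lat F r1 j s1 m))
    (fun m => by
      have := transfer_minus (F := F) p hq (a := r0) (b := s0 - r0 + 2 * i) (c := s0) (d := s0 + i)
        (by omega) (by omega) (by omega) (by omega) (by omega) (by omega) hr hj hs m
      have e : m + (((s0 + i) * q - j : ℕ) : ℤ) = m + (s0 + i : ℕ) * q - j := by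
        rw [Nat.cast_sub hjD]
        push_cast
        ring
      exact (congrArg (fun z : ℤ => Module.finrank F
        (lat F (r0 * q + r1) ((s0 - r0 + 2 * i) * q - j) (s0 * q + s1) z)) e).trans this)
    (fun m hm => finrank_lat_nonpos hm) (r1 + s1 + (s0 + i) * q + j)
  have hb := finrank_ker_formula (F := F) (r0 * q + r1) (s0 * q + s1) ((s0 - r0 + 2 * i) * q - j) j
  have hs := finrank_ker_formula (F := F) r1 s1 j ((s0 + i) * q)
  rw [← kdim] at hb hs
  have hrange : r0 * q + r1 + (s0 * q + s1) + j + ((s0 - r0 + 2 * i) * q - j) =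
      (s0 + i) * q - j + (r1 + s1 + (s0 + i) * q + j) := by
    zify [h0, hjD, hjk]
    ring
  rw [hrange, ht] at hb
  zify [h0, hjD, hjk] at hb hs ⊢
  have h2 : (2 : ℤ) ≠ 0 := two_ne_zero
  apply mul_left_cancel₀ h2
  linear_combination hb - hs

end KDim

/-! ### Kernel dimensions at the ends -/

section KDim2
variable {F : Type*} [Field F]

theorem finrank_V (r s : ℕ) : Module.finrank F (Fin r × Fin s → F) = r * s := by
  rw [Module.finrank_fintype_fun_eq_card]; simp

/-- `(x + y)^Q = x^Q + y^Q` annihilates the module when `r, s ≤ Q` and `Q` is a power of the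
characteristic. -/
theorem raiseN_pow_eq_zero {r s Q : ℕ} (hQ : (1 + X : F[X]) ^ Q = 1 + X ^ Q) (hr : r ≤ Q)
    (hs : s ≤ Q) : raiseN F r s ^ Q = 0 := by
  apply LinearMap.ext
  intro v
  ext ⟨⟨i, hi⟩, ⟨j, hj⟩⟩
  rw [raiseN_pow]
  split_ifs with h
  · rw [hQ, add_mul, one_mul, coeff_add, coeff_X_pow_mul', if_neg (by omega : ¬ Q ≤ i), add_zero,
      coeff_hP, if_neg (by omega : ¬ i ≤ i + j - Q)]
    rfl
  · rfl

theorem kdim_eq_of_le {r s Q k : ℕ} (hQ : (1 + X : F[X]) ^ Q = 1 + X ^ Q) (hr : r ≤ Q)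
    (hs : s ≤ Q) (hk : Q ≤ k) : kdim F r s k = r * s := by
  have : raiseN F r s ^ k = 0 := by
    rw [← Nat.add_sub_cancel' hk, pow_add, raiseN_pow_eq_zero hQ hr hs, zero_mul]
  rw [kdim, this, LinearMap.ker_zero, finrank_top, finrank_V]

theorem kdim_one_le {r s : ℕ} (hr : 1 ≤ r) : kdim F r s 1 ≤ s := by
  rw [kdim, pow_one]
  let φ : LinearMap.ker (raiseN F r s) →ₗ[F] (Fin s → F) :=
    LinearMap.funLeft F F (fun j => (⟨r - 1, by omega⟩, j)) ∘ₗ (LinearMap.ker (raiseN F r s)).subtype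
  have hφ : Function.Injective φ := by
    rw [← LinearMap.ker_eq_bot, LinearMap.ker_eq_bot']
    rintro ⟨v, hv⟩ h0
    have key : ∀ t i j (hi : i < r) (hj : j < s), i + t = r - 1 → v (⟨i, hi⟩, ⟨j, hj⟩) = 0 := by
      intro t
      induction t with
      | zero =>
        intro i j hi hj h
        obtain rfl : i = r - 1 := by omega
        exact congrFun h0 ⟨j, hj⟩
      | succ t ih =>
        intro i j hi hj h
        have h1 := congrFun (LinearMap.mem_ker.1 hv) (⟨i + 1, by omega⟩, ⟨j, hj⟩)
        rw [raiseN_apply, if_pos (by omega)] at h1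
        have h2 : (if 0 < j then v (⟨i + 1, by omega⟩, ⟨j - 1, by omega⟩) else 0) = 0 := by
          split_ifs
          · exact ih (i + 1) (j - 1) _ _ (by omega)
          · rfl
        rw [h2, add_zero] at h1
        exact h1
    apply Subtype.ext
    ext ⟨⟨i, hi⟩, ⟨j, hj⟩⟩
    exact key (r - 1 - i) i j hi hj (by omega)
  have := LinearMap.finrank_le_finrank_of_injective hφ
  simpa using this

theorem kdim_one_le' {r s : ℕ} (hs : 1 ≤ s) : kdim F r s 1 ≤ r := by
  rw [kdim, pow_one]
  let φ : LinearMap.ker (raiseN F r s) →ₗ[F] (Fin r → F) :=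
    LinearMap.funLeft F F (fun i => (i, ⟨s - 1, by omega⟩)) ∘ₗ (LinearMap.ker (raiseN F r s)).subtype
  have hφ : Function.Injective φ := by
    rw [← LinearMap.ker_eq_bot, LinearMap.ker_eq_bot']
    rintro ⟨v, hv⟩ h0
    have key : ∀ t i j (hi : i < r) (hj : j < s), j + t = s - 1 → v (⟨i, hi⟩, ⟨j, hj⟩) = 0 := by
      intro t
      induction t with
      | zero =>
        intro i j hi hj h
        obtain rfl : j = s - 1 := by omega
        exact congrFun h0 ⟨i, hi⟩
      | succ t ih =>
        intro i j hi hj h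
        have h1 := congrFun (LinearMap.mem_ker.1 hv) (⟨i, hi⟩, ⟨j + 1, by omega⟩)
        rw [raiseN_apply, if_pos (show 0 < j + 1 by omega)] at h1
        have h2 : (if 0 < i then v (⟨i - 1, by omega⟩, ⟨j + 1, by omega⟩) else 0) = 0 := by
          split_ifs
          · exact ih (i - 1) (j + 1) _ _ (by omega)
          · rfl
        rw [h2, zero_add] at h1
        exact h1
    apply Subtype.ext
    ext ⟨⟨i, hi⟩, ⟨j, hj⟩⟩
    exact key (s - 1 - j) i j hi hj (by omega)
  have := LinearMap.finrank_le_finrank_of_injective hφ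
  simpa using this

/-- The alternating sums of monomials of each degree `≥ max r s - 1` are killed by `x + y`. -/
theorem le_kdim_one {r s : ℕ} (hr : 1 ≤ r) (hs : 1 ≤ s) : min r s ≤ kdim F r s 1 := by
  rw [kdim, pow_one]
  let φ : (Fin (min r s) → F) →ₗ[F] (Fin r × Fin s → F) :=
    { toFun := fun w x => (-1) ^ (x.1 : ℕ) *
        (if h : max r s - 1 ≤ (x.1 : ℕ) + x.2 then w ⟨x.1 + x.2 - (max r s - 1), by omega⟩ else 0)
      map_add' := fun v w => by
        ext x
        simp only [Pi.add_apply]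
        split_ifs <;> ring
      map_smul' := fun c v => by
        ext x
        simp only [Pi.smul_apply, smul_eq_mul, RingHom.id_apply]
        split_ifs <;> ring }
  have hφ : ∀ w i j (hi : i < r) (hj : j < s), φ w (⟨i, hi⟩, ⟨j, hj⟩) = (-1) ^ i *
      (if h : max r s - 1 ≤ i + j then w ⟨i + j - (max r s - 1), by omega⟩ else 0) :=
    fun _ _ _ _ _ => rfl
  have hker : ∀ w, φ w ∈ LinearMap.ker (raiseN F r s) := by
    intro w
    rw [LinearMap.mem_ker]
    ext ⟨⟨i, hi⟩, ⟨j, hj⟩⟩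
    rw [raiseN_apply, hφ, hφ, Pi.zero_apply]
    by_cases h1 : 0 < i
    · by_cases h2 : 0 < j
      · rw [if_pos h1, if_pos h2]
        obtain ⟨i, rfl⟩ : ∃ i', i = i' + 1 := ⟨i - 1, by omega⟩
        obtain ⟨j, rfl⟩ : ∃ j', j = j' + 1 := ⟨j - 1, by omega⟩
        simp only [Nat.add_sub_cancel, show i + 1 + j = i + (j + 1) by omega, pow_succ]
        ring
      · rw [if_pos h1, if_neg h2, dif_neg (by omega)]
        ring
    · rw [if_neg h1]
      split_ifs with h2 h3
      · omega
      · ring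
      · ring
  have hinj : Function.Injective (φ.codRestrict _ hker) := by
    rw [← LinearMap.ker_eq_bot, LinearMap.ker_eq_bot']
    intro w h0
    ext ⟨t, ht⟩
    have h0' : φ w = 0 := congrArg Subtype.val h0
    have hv : ∀ i j, i < r → j < s → i + j = max r s - 1 + t → w ⟨t, ht⟩ = 0 := by
      intro i j hi hj hij
      have := congrFun h0' (⟨i, hi⟩, ⟨j, hj⟩)
      rw [hφ, dif_pos (by omega), Pi.zero_apply] at this
      have h3 := (mul_eq_zero.1 this).resolve_left (pow_ne_zero _ (neg_ne_zero.2 one_ne_zero))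
      have h4 : (⟨i + j - (max r s - 1), by omega⟩ : Fin (min r s)) = ⟨t, ht⟩ :=
        Fin.ext (by simp only; omega)
      rwa [h4] at h3
    rcases le_total r s with h | h
    · exact hv t (s - 1) (by omega) (by omega) (by omega)
    · exact hv (r - 1) t (by omega) (by omega) (by omega)
  have := LinearMap.finrank_le_finrank_of_injective hinj
  simpa using this

theorem kdim_one {r s : ℕ} (hr : 1 ≤ r) (hs : 1 ≤ s) : kdim F r s 1 = min r s :=
  le_antisymm (le_min (kdim_one_le' hs) (kdim_one_le hr)) (le_kdim_one hr hs)

theorem coeff_X1_pow_ne_zero {Q : ℕ} (hQ : (1 + X : F[X]) ^ Q = 1 + X ^ Q) {i : ℕ} (hi : i < Q) :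
    ((1 + X : F[X]) ^ (Q - 1)).coeff i ≠ 0 := by
  have h : (1 + X : F[X]) ^ (Q - 1) + X * (1 + X) ^ (Q - 1) = 1 + X ^ Q := by
    rw [← hQ, show Q = Q - 1 + 1 by omega, pow_succ]
    simp only [Nat.add_sub_cancel]
    ring
  induction i with
  | zero =>
    have := congrArg (fun u => coeff u 0) h
    simp only [coeff_add, mul_coeff_zero, coeff_X_zero, zero_mul, add_zero, coeff_one_zero,
      coeff_X_pow, if_neg hi.ne] at this
    rw [this]
    exact one_ne_zero
  | succ i ih =>
    have := congrArg (fun u => coeff u (i + 1)) h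
    simp only [coeff_add, coeff_X_mul, coeff_X_pow, if_neg hi.ne, coeff_one, Nat.succ_ne_zero,
      if_false, add_zero] at this
    rw [eq_neg_of_add_eq_zero_left this]
    exact neg_ne_zero.2 (ih (by omega))

/-- `(x + y)^(Q-1)` has rank at least `r + s - Q`: it is nonzero on `y^e` for `e < r + s - Q`. -/
theorem kdim_top {r s Q : ℕ} (hQ : (1 + X : F[X]) ^ Q = 1 + X ^ Q) (hr1 : 1 ≤ r) (hr : r ≤ Q) :
    kdim F r s (Q - 1) + (r + s - Q) ≤ r * s := by
  let φ : (Fin (r + s - Q) → F) →ₗ[F] (Fin r × Fin s → F) :=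
    { toFun := fun w x => if h : (x.1 : ℕ) = 0 ∧ (x.2 : ℕ) < r + s - Q then w ⟨x.2, h.2⟩ else 0
      map_add' := fun v w => by
        ext x
        simp only [Pi.add_apply]
        split_ifs <;> ring
      map_smul' := fun c v => by
        ext x
        simp only [Pi.smul_apply, smul_eq_mul, RingHom.id_apply]
        split_ifs <;> ring }
  have hφ : ∀ w i j (hi : i < r) (hj : j < s), φ w (⟨i, hi⟩, ⟨j, hj⟩) =
      if h : i = 0 ∧ j < r + s - Q then w ⟨j, h.2⟩ else 0 := fun _ _ _ _ _ => rfl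
  have hhP : ∀ w e (he : e < r + s - Q), hP F r s e (φ w) = C (w ⟨e, he⟩) := by
    intro w e he
    ext n
    rw [coeff_hP, coeff_C]
    by_cases hn : n = 0
    · subst hn
      rw [if_pos (Nat.zero_le _), if_pos rfl, Nat.sub_zero, extL_of_lt (by omega) (by omega), hφ,
        dif_pos ⟨rfl, he⟩]
    · rw [if_neg hn]
      split_ifs with h
      · by_cases h' : n < r ∧ e - n < s
        · rw [extL_of_lt h'.1 h'.2, hφ, dif_neg (by tauto)]
        · exact extL_of_not h' _
      · rfl
  have hinj : Function.Injective ((raiseN F r s ^ (Q - 1)) ∘ₗ φ) := by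
    rw [← LinearMap.ker_eq_bot, LinearMap.ker_eq_bot']
    intro w h0
    ext ⟨e, he⟩
    have := congrFun h0 (⟨r - 1, by omega⟩, ⟨e + Q - r, by omega⟩)
    rw [LinearMap.comp_apply, raiseN_pow, if_pos (by omega),
      show r - 1 + (e + Q - r) - (Q - 1) = e by omega, hhP w e he, coeff_mul_C] at this
    exact (mul_eq_zero.1 this).resolve_left (coeff_X1_pow_ne_zero hQ (by omega))
  have h1 := LinearMap.finrank_range_of_inj hinj
  have h2 := Submodule.finrank_mono (LinearMap.range_comp_le_range φ (raiseN F r s ^ (Q - 1)))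
  have h3 := LinearMap.finrank_range_add_finrank_ker (raiseN F r s ^ (Q - 1))
  rw [finrank_V] at h3
  rw [h1, Module.finrank_fintype_fun_eq_card, Fintype.card_fin] at h2
  rw [kdim]
  omega

end KDim2

/-! ### Jordan form of a nilpotent operator -/

section Jordan
variable {F : Type*} [Field F]

/-- The nilpotent operator with one lowering shift of size `κ i` for each index `i`; this is the
nilpotent part of a block-diagonal unipotent Jordan matrix. -/
def shiftN (F : Type*) [Field F] {ι : Type*} (κ : ι → ℕ) :
    Module.End F (((i : ι) × Fin (κ i)) → F) where
  toFun v x := if h : (x.2 : ℕ) + 1 < κ x.1 then v ⟨x.1, ⟨x.2 + 1, h⟩⟩ else 0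
  map_add' v w := by
    ext x
    simp only [Pi.add_apply]
    split_ifs <;> simp
  map_smul' c v := by
    ext x
    simp only [Pi.smul_apply, RingHom.id_apply]
    split_ifs <;> simp

theorem shiftN_apply {ι : Type*} (κ : ι → ℕ) (v : ((i : ι) × Fin (κ i)) → F) (i : ι) (a : ℕ)
    (ha : a < κ i) :
    shiftN F κ v ⟨i, ⟨a, ha⟩⟩ = if h : a + 1 < κ i then v ⟨i, ⟨a + 1, h⟩⟩ else 0 := rfl

theorem shiftN_pow_apply {ι : Type*} (κ : ι → ℕ) (k : ℕ) (v : ((i : ι) × Fin (κ i)) → F) (i : ι)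
    (a : ℕ) (ha : a < κ i) :
    (shiftN F κ ^ k) v ⟨i, ⟨a, ha⟩⟩ = if h : a + k < κ i then v ⟨i, ⟨a + k, h⟩⟩ else 0 := by
  induction k generalizing a with
  | zero => simp [ha]
  | succ k ih =>
    rw [pow_succ', Module.End.mul_apply, shiftN_apply]
    by_cases h : a + 1 < κ i
    · rw [dif_pos h, ih]
      simp only [show a + 1 + k = a + (k + 1) by omega]
    · rw [dif_neg h, dif_neg (by omega)]

/-- The kernel of the `k`-th power consists of the vectors supported on the first `k` coordinates
of each block. -/
theorem finrank_ker_shiftN_pow {ι : Type*} [Fintype ι] (κ : ι → ℕ) (k : ℕ) :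
    Module.finrank F (LinearMap.ker (shiftN F κ ^ k)) = ∑ i, min (κ i) k := by
  let e : LinearMap.ker (shiftN F κ ^ k) ≃ₗ[F] (((i : ι) × Fin (min (κ i) k)) → F) :=
    { toFun := fun v x => v.1 ⟨x.1, ⟨x.2, by omega⟩⟩
      map_add' := fun _ _ => rfl
      map_smul' := fun _ _ => rfl
      invFun := fun w => ⟨fun x => if h : (x.2 : ℕ) < k then w ⟨x.1, ⟨x.2, by omega⟩⟩ else 0, by
        rw [LinearMap.mem_ker]
        ext ⟨i, ⟨a, ha⟩⟩
        rw [shiftN_pow_apply]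
        split_ifs with h h'
        · exact absurd h' (by simp)
        · rfl
        · rfl⟩
      left_inv := by
        rintro ⟨v, hv⟩
        apply Subtype.ext
        ext ⟨i, ⟨a, ha⟩⟩
        dsimp only
        split_ifs with h
        · rfl
        · have h1 := congrFun (LinearMap.mem_ker.1 hv) ⟨i, ⟨a - k, by omega⟩⟩
          rw [shiftN_pow_apply, dif_pos (by omega)] at h1
          simp only [show a - k + k = a by omega] at h1
          exact h1.symm
      right_inv := by
        intro w
        ext ⟨i, ⟨a, ha⟩⟩
        dsimp only
        rw [dif_pos (by omega)] }
  rw [e.finrank_eq, Module.finrank_fintype_fun_eq_card, Fintype.card_sigma]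
  simp

/-- Coordinates on `F[X] / (X ^ m)` in which multiplication by `X` is the lowering shift. -/
noncomputable def revCoeff (F : Type*) [Field F] (m : ℕ) : F[X] →ₗ[F] (Fin m → F) :=
  LinearMap.pi fun i => lcoeff F (m - 1 - i)

theorem revCoeff_apply (m : ℕ) (f : F[X]) (i : Fin m) : revCoeff F m f i = f.coeff (m - 1 - i) :=
  rfl

theorem ker_revCoeff (m : ℕ) : LinearMap.ker (revCoeff F m) =
    (Submodule.span F[X] {(X : F[X]) ^ m}).restrictScalars F := by
  ext f
  rw [LinearMap.mem_ker, Submodule.restrictScalars_mem, Ideal.submodule_span_eq,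
    Ideal.mem_span_singleton, X_pow_dvd_iff]
  constructor
  · intro h d hd
    have := congrFun h ⟨m - 1 - d, by omega⟩
    rw [revCoeff_apply, Pi.zero_apply] at this
    simpa only [show m - 1 - (m - 1 - d) = d by omega] using this
  · intro h
    ext i
    exact h _ (by omega)

theorem revCoeff_surjective (m : ℕ) : Function.Surjective (revCoeff F m) := by
  intro w
  refine ⟨∑ i : Fin m, monomial (m - 1 - i) (w i), ?_⟩
  ext i
  rw [revCoeff_apply, finsetSum_coeff, Finset.sum_eq_single i]
  · simp
  · intro b _ hb
    rw [coeff_monomial, if_neg]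
    intro h
    exact hb (Fin.ext (by omega))
  · simp

/-- `F[X] / (X ^ m) ≃ F ^ m` via `revCoeff`. -/
noncomputable def quotEquiv (F : Type*) [Field F] (m : ℕ) :
    (F[X] ⧸ Submodule.span F[X] {(X : F[X]) ^ m}) ≃ₗ[F] (Fin m → F) :=
  (Submodule.Quotient.restrictScalarsEquiv F (Submodule.span F[X] {(X : F[X]) ^ m})).symm ≪≫ₗ
    Submodule.quotEquivOfEq _ _ (ker_revCoeff m).symm ≪≫ₗ
    (revCoeff F m).quotKerEquivOfSurjective (revCoeff_surjective m)

theorem quotEquiv_mk (m : ℕ) (f : F[X]) :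
    quotEquiv F m (Submodule.Quotient.mk f) = revCoeff F m f := rfl

theorem quotEquiv_X_smul (m : ℕ) (x : F[X] ⧸ Submodule.span F[X] {(X : F[X]) ^ m}) (a : ℕ)
    (ha : a < m) : quotEquiv F m ((X : F[X]) • x) ⟨a, ha⟩ =
      if h : a + 1 < m then quotEquiv F m x ⟨a + 1, h⟩ else 0 := by
  obtain ⟨f, rfl⟩ := Submodule.Quotient.mk_surjective _ x
  rw [← Submodule.Quotient.mk_smul, quotEquiv_mk, quotEquiv_mk, revCoeff_apply, smul_eq_mul]
  split_ifs with h
  · rw [revCoeff_apply]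
    simp only
    rw [show m - 1 - a = m - 1 - (a + 1) + 1 by omega, coeff_X_mul]
  · simp only
    rw [show m - 1 - a = 0 by omega, coeff_X_mul_zero]

/-- Jordan normal form of a nilpotent operator, from the structure theorem for finitely generated
torsion modules over `F[X]`. -/
theorem exists_jordan {V : Type*} [AddCommGroup V] [Module F V] [Module.Finite F V]
    (N : Module.End F V) {Q : ℕ} (hN : N ^ Q = 0) :
    ∃ (l : ℕ) (κ : Fin l → ℕ) (e : V ≃ₗ[F] (((i : Fin l) × Fin (κ i)) → F)),
      ∀ v, e (N v) = shiftN F κ (e v) := by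
  have htor : Module.IsTorsion' (Module.AEval' N) (Submonoid.powers (X : F[X])) := by
    intro x
    refine ⟨⟨X ^ Q, Q, rfl⟩, ?_⟩
    obtain ⟨v, rfl⟩ := (Module.AEval'.of N).surjective x
    have := Module.AEval.X_pow_smul_of (R := F) (M := V) N v Q
    rw [hN, zero_smul, map_zero] at this
    exact this
  obtain ⟨l, κ, ⟨e0⟩⟩ :=
    Module.torsion_by_prime_power_decomposition (irreducible_X (R := F)) htor
  let e1 := e0 ≪≫ₗ DirectSum.linearEquivFunOnFintype F[X] (Fin l)
    (fun i => F[X] ⧸ Submodule.span F[X] {(X : F[X]) ^ (κ i)})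
  let e2 : V ≃ₗ[F] (((i : Fin l) × Fin (κ i)) → F) :=
    Module.AEval'.of N ≪≫ₗ e1.restrictScalars F ≪≫ₗ
      LinearEquiv.piCongrRight (fun i => quotEquiv F (κ i)) ≪≫ₗ
      (LinearEquiv.piCurry F (fun (i : Fin l) (_ : Fin (κ i)) => F)).symm
  have he2 : ∀ v i a (ha : a < κ i), e2 v ⟨i, ⟨a, ha⟩⟩ =
      quotEquiv F (κ i) (e1 (Module.AEval'.of N v) i) ⟨a, ha⟩ := fun _ _ _ _ => rfl
  refine ⟨l, κ, e2, fun v => ?_⟩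
  ext ⟨i, ⟨a, ha⟩⟩
  rw [shiftN_apply, he2]
  have h1 : Module.AEval'.of N (N v) = (X : F[X]) • Module.AEval'.of N v :=
    (Module.AEval'.X_smul_of N v).symm
  rw [h1, map_smul, Pi.smul_apply, quotEquiv_X_smul]
  rfl

end Jordan

/-! ### Similarity and kernel dimensions -/

section Similar
variable {F : Type*} [Field F]

/-- The second difference of `k ↦ min x k` at `m` is minus the indicator of `x = m`. -/
theorem card_add_sum_min {ι : Type*} [Fintype ι] (κ : ι → ℕ) {m : ℕ} (hm : 0 < m) :
    Fintype.card {i // κ i = m} + (∑ i, min (κ i) (m - 1) + ∑ i, min (κ i) (m + 1)) =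
      ∑ i, min (κ i) m + ∑ i, min (κ i) m := by
  rw [Fintype.card_subtype, Finset.card_filter, ← Finset.sum_add_distrib,
    ← Finset.sum_add_distrib, ← Finset.sum_add_distrib]
  refine Finset.sum_congr rfl fun i _ => ?_
  split_ifs <;> omega

theorem card_eq_of_sum_min {ι ι' : Type*} [Fintype ι] [Fintype ι'] (κ : ι → ℕ) (d : ι' → ℕ)
    (h : ∀ k, ∑ i, min (κ i) k = ∑ j, min (d j) k) (m : ℕ) (hm : 0 < m) :
    Fintype.card {i // κ i = m} = Fintype.card {j // d j = m} := by
  have h1 := card_add_sum_min κ hm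
  have h2 := card_add_sum_min d hm
  have h3 := h (m - 1)
  have h4 := h m
  have h5 := h (m + 1)
  omega

/-- Shift operators whose powers have equal kernel dimensions are conjugate: they have the same
number of blocks of each positive size. -/
theorem exists_shiftN_equiv {ι ι' : Type*} [Fintype ι] [Fintype ι'] (κ : ι → ℕ) (d : ι' → ℕ)
    (h : ∀ k, ∑ i, min (κ i) k = ∑ j, min (d j) k) :
    ∃ e : (((i : ι) × Fin (κ i)) → F) ≃ₗ[F] (((j : ι') × Fin (d j)) → F),
      ∀ v, e (shiftN F κ v) = shiftN F d (e v) := by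
  classical
  have hfib : ∀ m, Nonempty
      ({x : {i // 0 < κ i} // κ x.1 = m} ≃ {y : {j // 0 < d j} // d y.1 = m}) := by
    intro m
    by_cases hm : 0 < m
    · have e1 : {x : {i // 0 < κ i} // κ x.1 = m} ≃ {i // κ i = m} :=
        Equiv.subtypeSubtypeEquivSubtype (p := fun i => 0 < κ i) (q := fun i => κ i = m)
          (by rintro x rfl; exact hm)
      have e2 : {x : {i // 0 < d i} // d x.1 = m} ≃ {i // d i = m} :=
        Equiv.subtypeSubtypeEquivSubtype (p := fun i => 0 < d i) (q := fun i => d i = m)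
          (by rintro x rfl; exact hm)
      exact ⟨e1.trans ((Fintype.equivOfCardEq (card_eq_of_sum_min κ d h m hm)).trans e2.symm)⟩
    · have i1 : IsEmpty {x : {i // 0 < κ i} // κ x.1 = m} := 
        ⟨fun x => hm (x.2 ▸ x.1.2)⟩
      have i2 : IsEmpty {x : {i // 0 < d i} // d x.1 = m} := 
        ⟨fun x => hm (x.2 ▸ x.1.2)⟩
      exact ⟨Equiv.equivOfIsEmpty _ _⟩
  let σ : {i // 0 < κ i} ≃ {j // 0 < d j} :=
    Equiv.ofFiberEquiv (f := fun x : {i // 0 < κ i} => κ x.1) (g := fun y : {j // 0 < d j} => d y.1)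
      fun m => (hfib m).some
  have hσ : ∀ x, d (σ x).1 = κ x.1 := fun x =>
    Equiv.ofFiberEquiv_map (f := fun x : {i // 0 < κ i} => κ x.1)
      (g := fun y : {j // 0 < d j} => d y.1) (fun m => (hfib m).some) x
  have hσ' : ∀ y, κ (σ.symm y).1 = d y.1 := fun y => by rw [← hσ, Equiv.apply_symm_apply]
  have hv : ∀ (v : ((i : ι) × Fin (κ i)) → F) (x x' : {i // 0 < κ i}) (a : ℕ) (ha : a < κ x.1)
      (ha' : a < κ x'.1), x = x' → v ⟨x.1, ⟨a, ha⟩⟩ = v ⟨x'.1, ⟨a, ha'⟩⟩ := by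
    rintro v x _ a ha ha' rfl
    rfl
  have hw : ∀ (v : ((i : ι') × Fin (d i)) → F) (x x' : {i // 0 < d i}) (a : ℕ) (ha : a < d x.1)
      (ha' : a < d x'.1), x = x' → v ⟨x.1, ⟨a, ha⟩⟩ = v ⟨x'.1, ⟨a, ha'⟩⟩ := by
    rintro v x _ a ha ha' rfl
    rfl
  let e : (((i : ι) × Fin (κ i)) → F) ≃ₗ[F] (((j : ι') × Fin (d j)) → F) :=
    { toFun := fun v y => v ⟨(σ.symm ⟨y.1, y.2.pos⟩).1, ⟨y.2, by rw [hσ']; exact y.2.2⟩⟩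
      map_add' := fun _ _ => rfl
      map_smul' := fun _ _ => rfl
      invFun := fun w x => w ⟨(σ ⟨x.1, x.2.pos⟩).1, ⟨x.2, by rw [hσ]; exact x.2.2⟩⟩
      left_inv := by
        intro v
        ext ⟨i, ⟨a, ha⟩⟩
        exact hv v _ ⟨i, by omega⟩ a _ ha (σ.symm_apply_apply _)
      right_inv := by
        intro w
        ext ⟨i, ⟨a, ha⟩⟩
        exact hw w _ ⟨i, by omega⟩ a _ ha (σ.apply_symm_apply _) }
  refine ⟨e, fun v => ?_⟩
  ext ⟨j, ⟨a, ha⟩⟩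
  rw [shiftN_apply]
  change shiftN F κ v ⟨(σ.symm ⟨j, _⟩).1, ⟨a, _⟩⟩ = _
  rw [shiftN_apply]
  simp only [hσ']
  rfl

theorem jordanBlock_mulVec (m : ℕ) (w : Fin m → F) (i : ℕ) (hi : i < m) :
    (jordanBlock F m).mulVec w ⟨i, hi⟩ =
      w ⟨i, hi⟩ + if h : i + 1 < m then w ⟨i + 1, h⟩ else 0 := by
  have h1 : ∀ j : Fin m, jordanBlock F m ⟨i, hi⟩ j * w j =
      (if j = ⟨i, hi⟩ then w j else 0) + (if (j : ℕ) = i + 1 then w j else 0) := by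
    intro j
    simp only [jordanBlock, Matrix.of_apply, Fin.ext_iff]
    by_cases h : (j : ℕ) = i
    · simp [h]
    · simp [h]
  rw [Matrix.mulVec, dotProduct, Finset.sum_congr rfl fun j _ => h1 j, Finset.sum_add_distrib,
    Finset.sum_ite_eq' Finset.univ, if_pos (Finset.mem_univ _)]
  congr 1
  split_ifs with h
  · rw [Finset.sum_eq_single ⟨i + 1, h⟩]
    · simp
    · intro b _ hb
      rw [if_neg fun h' => hb (Fin.ext h')]
    · simp
  · refine Finset.sum_eq_zero fun j _ => ?_
    rw [if_neg (by omega)]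

theorem jordanBlockDiag_mulVec {ι : Type} [Fintype ι] [DecidableEq ι] (d : ι → ℕ)
    (v : ((i : ι) × Fin (d i)) → F) : (jordanBlockDiag F d).mulVec v = v + shiftN F d v := by
  ext ⟨i, ⟨a, ha⟩⟩
  rw [Pi.add_apply, shiftN_apply, ← jordanBlock_mulVec (d i) (fun a => v ⟨i, a⟩) a ha,
    Matrix.mulVec, dotProduct, Fintype.sum_sigma, Finset.sum_eq_single i]
  · simp only [jordanBlockDiag, Matrix.blockDiagonal'_apply_eq]
    rfl
  · intro b _ hb
    refine Finset.sum_eq_zero fun j _ => ?_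
    rw [jordanBlockDiag, Matrix.blockDiagonal'_apply_ne _ _ _ hb.symm, zero_mul]
  · simp

theorem kronecker_mulVec (r s : ℕ) (v : Fin r × Fin s → F) (i : Fin r) (j : Fin s) :
    (jordanBlock F r ⊗ₖ jordanBlock F s).mulVec v (i, j) =
      (jordanBlock F s).mulVec (fun b => (jordanBlock F r).mulVec (fun a => v (a, b)) i) j := by
  simp only [Matrix.mulVec, dotProduct, Matrix.kronecker_apply, Fintype.sum_prod_type, Finset.mul_sum]
  rw [Finset.sum_comm]
  refine Finset.sum_congr rfl fun b _ => Finset.sum_congr rfl fun a _ => ?_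
  ring

theorem jordanBlock_injective (r : ℕ) :
    Function.Injective (Matrix.mulVecLin (jordanBlock F r)) := by
  rw [← LinearMap.ker_eq_bot, LinearMap.ker_eq_bot']
  intro w h0
  have key : ∀ t i (hi : i < r), i + t = r - 1 → w ⟨i, hi⟩ = 0 := by
    intro t
    induction t with
    | zero =>
      intro i hi h
      have := congrFun h0 ⟨i, hi⟩
      rw [Matrix.mulVecLin_apply, jordanBlock_mulVec, dif_neg (by omega), add_zero] at this
      exact this
    | succ t ih =>
      intro i hi h
      have := congrFun h0 ⟨i, hi⟩
      rw [Matrix.mulVecLin_apply, jordanBlock_mulVec, dif_pos (by omega),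
        ih (i + 1) _ (by omega), add_zero] at this
      exact this
  ext ⟨i, hi⟩
  exact key (r - 1 - i) i hi (by omega)

/-- Writing `T = J_r`, the unipotent map `J_r ⊗ J_s` is `1 + (T - 1) ⊗ 1 + T ⊗ (J_s - 1)`. Applying
`T ^ j` to the `j`-th slice `v (·, j)` absorbs the factor `T` of the last summand, and reversing
both coordinates turns the lowering shifts into raising ones. -/
theorem exists_kronecker_conj (r s : ℕ) : ∃ e : (Fin r × Fin s → F) ≃ₗ[F] (Fin r × Fin s → F),
    ∀ v, e ((jordanBlock F r ⊗ₖ jordanBlock F s).mulVec v) = e v + raiseN F r s (e v) := by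
  let T : Module.End F (Fin r → F) := Matrix.mulVecLin (jordanBlock F r)
  have hT : Function.Injective T := jordanBlock_injective r
  let G : Module.End F (Fin r × Fin s → F) :=
    { toFun := fun v x => (T ^ (s - 1 - (x.2 : ℕ))) (fun a => v (a, x.2.rev)) x.1.rev
      map_add' := fun v w => by
        ext x
        exact congrFun (map_add (T ^ (s - 1 - (x.2 : ℕ))) (fun a => v (a, x.2.rev))
          (fun a => w (a, x.2.rev))) x.1.rev
      map_smul' := fun c v => by
        ext x
        exact congrFun (map_smul (T ^ (s - 1 - (x.2 : ℕ))) c (fun a => v (a, x.2.rev))) x.1.rev }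
  have hG : ∀ v i j i' j' (hi : i < r) (hj : j < s) (hi' : i + i' + 1 = r) (hj' : j + j' + 1 = s),
      G v (⟨i, hi⟩, ⟨j, hj⟩) = (T ^ j') (fun a => v (a, ⟨j', by omega⟩)) ⟨i', by omega⟩ := by
    intro v i j i' j' hi hj hi' hj'
    have h1 : (⟨i, hi⟩ : Fin r).rev = ⟨i', by omega⟩ := Fin.ext (by simp only [Fin.val_rev]; omega)
    have h2 : (⟨j, hj⟩ : Fin s).rev = ⟨j', by omega⟩ := Fin.ext (by simp only [Fin.val_rev]; omega)
    change (T ^ (s - 1 - j)) (fun a => v (a, (⟨j, hj⟩ : Fin s).rev)) (⟨i, hi⟩ : Fin r).rev = _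
    rw [h1, h2, show s - 1 - j = j' by omega]
  have hinj : Function.Injective G := by
    rw [← LinearMap.ker_eq_bot, LinearMap.ker_eq_bot']
    intro v h0
    ext ⟨i, ⟨j, hj⟩⟩
    have h1 : (T ^ j) (fun a => v (a, ⟨j, hj⟩)) = 0 := by
      ext ⟨a, ha⟩
      rw [← hG v (r - 1 - a) (s - 1 - j) a j (by omega) (by omega) (by omega) (by omega), h0]
      rfl
    have h2 : Function.Injective (T ^ j) := by
      rw [Module.End.coe_pow]
      exact hT.iterate j
    exact congrFun ((injective_iff_map_eq_zero (T ^ j)).1 h2 _ h1) i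
  refine ⟨LinearEquiv.ofInjectiveEndo G hinj, fun v => ?_⟩
  change G _ = G v + raiseN F r s (G v)
  ext ⟨⟨i, hi⟩, ⟨j, hj⟩⟩
  obtain ⟨i', hi'⟩ : ∃ i', i + i' + 1 = r := ⟨r - 1 - i, by omega⟩
  obtain ⟨j', hj'⟩ : ∃ j', j + j' + 1 = s := ⟨s - 1 - j, by omega⟩
  have hslice : (fun a => (jordanBlock F r ⊗ₖ jordanBlock F s).mulVec v (a, ⟨j', by omega⟩)) =
      T (fun a => v (a, ⟨j', by omega⟩)) +
        if h : j' + 1 < s then T (fun a => v (a, ⟨j' + 1, h⟩)) else 0 := by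
    ext a
    rw [kronecker_mulVec, jordanBlock_mulVec, Pi.add_apply]
    split_ifs <;> rfl
  have hTa : ∀ (w : Fin r → F), T w ⟨i', by omega⟩ =
      w ⟨i', by omega⟩ + if h : i' + 1 < r then w ⟨i' + 1, h⟩ else 0 :=
    fun w => jordanBlock_mulVec r w i' _
  rw [hG _ i j i' j' hi hj hi' hj', hslice, map_add, Pi.add_apply, Pi.add_apply, raiseN_apply,
    ← Module.End.mul_apply, ← pow_succ, pow_succ', Module.End.mul_apply, hTa,
    hG v i j i' j' hi hj hi' hj', add_assoc]
  congr 2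
  · by_cases h : 0 < i
    · rw [dif_pos (by omega), if_pos h, hG v (i - 1) j (i' + 1) j' _ _ (by omega) (by omega)]
    · rw [dif_neg (by omega), if_neg h]
  · by_cases h : 0 < j
    · rw [dif_pos (by omega), if_pos h, hG v i (j - 1) i' (j' + 1) _ _ (by omega) (by omega),
        ← Module.End.mul_apply, ← pow_succ]
    · rw [dif_neg (by omega), if_neg h, map_zero]
      rfl

theorem finrank_ker_pow_of_conj {V W : Type*} [AddCommGroup V] [Module F V] [AddCommGroup W]
    [Module F W] (N : Module.End F V) (N' : Module.End F W) (e : V ≃ₗ[F] W)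
    (h : ∀ v, e (N v) = N' (e v)) (k : ℕ) :
    Module.finrank F (LinearMap.ker (N ^ k)) = Module.finrank F (LinearMap.ker (N' ^ k)) := by
  have hk : ∀ v, e ((N ^ k) v) = (N' ^ k) (e v) := by
    induction k with
    | zero => intro v; rfl
    | succ k ih =>
      intro v
      rw [pow_succ, pow_succ, Module.End.mul_apply, Module.End.mul_apply, ih, h]
  have : LinearMap.ker (N' ^ k) = (LinearMap.ker (N ^ k)).map (e : V →ₗ[F] W) := by
    ext w
    obtain ⟨v, rfl⟩ := e.surjective w
    rw [LinearMap.mem_ker, ← hk]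
    simp
  rw [this]
  exact (e.submoduleMap _).finrank_eq

theorem kdim_of_similar {r s : ℕ} {ι : Type} [Fintype ι] [DecidableEq ι] (d : ι → ℕ)
    (h : MatSimilar F (jordanBlock F r ⊗ₖ jordanBlock F s) (jordanBlockDiag F d)) (k : ℕ) :
    kdim F r s k = ∑ i, min (d i) k := by
  obtain ⟨e1, h1⟩ := h
  obtain ⟨e2, h2⟩ := exists_kronecker_conj (F := F) r s
  rw [kdim, ← finrank_ker_shiftN_pow (F := F)]
  refine finrank_ker_pow_of_conj _ _ (e2.symm ≪≫ₗ e1) (fun v => ?_) k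
  obtain ⟨v, rfl⟩ := e2.surjective v
  have h3 : raiseN F r s (e2 v) = e2 ((jordanBlock F r ⊗ₖ jordanBlock F s).mulVec v) - e2 v := by
    rw [h2, add_sub_cancel_left]
  rw [h3, LinearEquiv.trans_apply, LinearEquiv.trans_apply, map_sub, LinearEquiv.symm_apply_apply,
    LinearEquiv.symm_apply_apply, map_sub, h1, jordanBlockDiag_mulVec, add_sub_cancel_left]

/-- The kernel dimensions are those of a nilpotent Jordan matrix. -/
theorem exists_kdim_eq {r s Q : ℕ} (hQ : raiseN F r s ^ Q = 0) :
    ∃ (l : ℕ) (κ : Fin l → ℕ), ∀ k, kdim F r s k = ∑ i, min (κ i) k := by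
  obtain ⟨l, κ, e, he⟩ := exists_jordan (raiseN F r s) hQ
  refine ⟨l, κ, fun k => ?_⟩
  rw [kdim, ← finrank_ker_shiftN_pow (F := F)]
  exact finrank_ker_pow_of_conj _ _ e he k

theorem similar_of_kdim {r s Q : ℕ} (hQ : raiseN F r s ^ Q = 0) {ι : Type} [Fintype ι]
    [DecidableEq ι] (d : ι → ℕ) (h : ∀ k, kdim F r s k = ∑ i, min (d i) k) :
    MatSimilar F (jordanBlock F r ⊗ₖ jordanBlock F s) (jordanBlockDiag F d) := by
  obtain ⟨l, κ, e, he⟩ := exists_jordan (raiseN F r s) hQ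
  have hκ : ∀ k, ∑ i, min (κ i) k = ∑ i, min (d i) k := fun k => by
    rw [← h, kdim, ← finrank_ker_shiftN_pow (F := F)]
    exact (finrank_ker_pow_of_conj _ _ e he k).symm
  obtain ⟨e', he'⟩ := exists_shiftN_equiv (F := F) κ d hκ
  obtain ⟨e2, h2⟩ := exists_kronecker_conj (F := F) r s
  refine ⟨e2 ≪≫ₗ e ≪≫ₗ e', fun v => ?_⟩
  simp only [LinearEquiv.trans_apply]
  rw [h2, map_add, he, map_add, he', jordanBlockDiag_mulVec]

end Similar

/-! ### Truncated sums over arithmetic progressions -/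

section Count

theorem sum_min_split (f : ℕ → ℕ) {i d k : ℕ} (hi : i ≤ d) (h1 : ∀ x < i, f x ≤ k)
    (h2 : ∀ x, i ≤ x → k ≤ f x) :
    ∑ x ∈ Finset.range d, min (f x) k = ∑ x ∈ Finset.range i, f x + (d - i) * k := by
  obtain ⟨t, rfl⟩ := Nat.exists_eq_add_of_le hi
  rw [Finset.sum_range_add, Nat.add_sub_cancel_left]
  congr 1
  · exact Finset.sum_congr rfl fun x hx => min_eq_left (h1 x (Finset.mem_range.1 hx))
  · rw [Finset.sum_congr rfl fun x _ => min_eq_right (h2 (i + x) (Nat.le_add_right _ _))]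
    simp

theorem sum_AP (i a b : ℕ) :
    ((∑ x ∈ Finset.range i, (a + 2 * x * b) : ℕ) : ℤ) = i * a + b * (i ^ 2 - i) := by
  induction i with
  | zero => simp
  | succ i ih => rw [Finset.sum_range_succ, Nat.cast_add, ih]; push_cast; ring

/-- The blocks of sizes `(δ + 2i)q` with `1 ≤ i ≤ d`, truncated at `k`. -/
def sumEven (δ q d k : ℕ) : ℕ := ∑ x ∈ Finset.range d, min ((δ + 2 * (x + 1)) * q) k

/-- The blocks of sizes `(δ + 2i - 1)q` with `1 ≤ i ≤ d`, truncated at `k`. -/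
def sumOdd (δ q d k : ℕ) : ℕ := ∑ x ∈ Finset.range d, min ((δ + 2 * (x + 1) - 1) * q) k

/-- The blocks of sizes `(δ + 2i)q + ν` with `0 ≤ i ≤ d`, truncated at `k`. -/
def sumUp (δ q d ν k : ℕ) : ℕ := ∑ x ∈ Finset.range (d + 1), min ((δ + 2 * x) * q + ν) k

/-- The blocks of sizes `(δ + 2i)q - ν` with `1 ≤ i ≤ d`, truncated at `k`. -/
def sumDown (δ q d ν k : ℕ) : ℕ := ∑ x ∈ Finset.range d, min ((δ + 2 * (x + 1)) * q - ν) k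

theorem mul_le_aux {a b q : ℕ} (h : a ≤ b) : a * q ≤ b * q := Nat.mul_le_mul_right q h

theorem sumEven_eq {δ q d k i : ℕ} (hi : i ≤ d) (h1 : (δ + 2 * i) * q ≤ k)
    (h2 : k ≤ (δ + 2 * (i + 1)) * q) :
    (sumEven δ q d k : ℤ) = q * (i * δ + i ^ 2 + i) + (d - i) * k := by
  rw [sumEven, sum_min_split _ hi]
  · have := sum_AP i ((δ + 2) * q) q
    rw [Finset.sum_congr rfl fun x _ => show (δ + 2 * (x + 1)) * q = (δ + 2) * q + 2 * x * q by ring]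
    push_cast [Nat.cast_sub hi] at this ⊢
    rw [this]
    ring
  · intro x hx
    exact (mul_le_aux (by omega)).trans h1
  · intro x hx
    exact h2.trans (mul_le_aux (by omega))

theorem sumOdd_eq {δ q d k i : ℕ} (hi : i ≤ d) (h1 : 1 ≤ i → (δ + 2 * i - 1) * q ≤ k)
    (h2 : k ≤ (δ + 2 * i + 1) * q) :
    (sumOdd δ q d k : ℤ) = q * (i * δ + i ^ 2) + (d - i) * k := by
  rw [sumOdd, sum_min_split _ hi]
  · have := sum_AP i ((δ + 1) * q) q
    rw [Finset.sum_congr rfl fun x _ => show (δ + 2 * (x + 1) - 1) * q = (δ + 1) * q + 2 * x * q by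
      rw [show δ + 2 * (x + 1) - 1 = δ + 1 + 2 * x by omega]; ring]
    push_cast [Nat.cast_sub hi] at this ⊢
    rw [this]
    ring
  · intro x hx
    exact (mul_le_aux (by omega)).trans (h1 (by omega))
  · intro x hx
    exact h2.trans (mul_le_aux (by omega))

theorem sum_up_AP (δ q ν i : ℕ) : ((∑ x ∈ Finset.range i, ((δ + 2 * x) * q + ν) : ℕ) : ℤ) =
    q * (i * δ + i ^ 2 - i) + i * ν := by
  have := sum_AP i (δ * q + ν) q
  rw [Finset.sum_congr rfl fun x _ => show (δ + 2 * x) * q + ν = δ * q + ν + 2 * x * q by ring]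
  push_cast at this ⊢
  rw [this]
  ring

theorem sum_down_AP (δ q ν i : ℕ) (hν : ν ≤ q) :
    ((∑ x ∈ Finset.range i, ((δ + 2 * (x + 1)) * q - ν) : ℕ) : ℤ) =
      q * (i * δ + i ^ 2 + i) - i * ν := by
  have h0 : ν ≤ (δ + 2) * q := hν.trans (Nat.le_mul_of_pos_left q (by omega))
  have := sum_AP i ((δ + 2) * q - ν) q
  rw [Finset.sum_congr rfl fun x _ => show (δ + 2 * (x + 1)) * q - ν =
    (δ + 2) * q - ν + 2 * x * q by rw [← Nat.sub_add_comm h0]; ring_nf]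
  push_cast [Nat.cast_sub h0] at this ⊢
  rw [this]
  ring

theorem sumUpDown_plus {δ q d ν k i l : ℕ} (hi : i ≤ d) (hν : ν ≤ q) (hl : l ≤ q)
    (hk : k = (δ + 2 * i) * q + l) :
    ((sumUp δ q d ν k + sumDown δ q d ν k : ℕ) : ℤ) =
      2 * q * (i * δ + i ^ 2) + (δ + 2 * i) * q + 2 * (d - i) * k + min ν l := by
  have hsplit : sumUp δ q d ν k =
      ∑ x ∈ Finset.range i, ((δ + 2 * x) * q + ν) + ((δ + 2 * i) * q + min ν l) + (d - i) * k := by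
    rw [sumUp, show d + 1 = i + 1 + (d - i) by omega, Finset.sum_range_add, Finset.sum_range_succ]
    congr 1
    · congr 1
      · refine Finset.sum_congr rfl fun x hx => min_eq_left ?_
        have := Finset.mem_range.1 hx
        have h1 : (δ + 2 * x + 1) * q ≤ (δ + 2 * i) * q := mul_le_aux (by omega)
        rw [add_mul, one_mul] at h1
        omega
      · omega
    · rw [Finset.sum_congr rfl fun x _ => min_eq_right ?_]
      · simp
      · have h1 : (δ + 2 * i + 1) * q ≤ (δ + 2 * (i + 1 + x)) * q := mul_le_aux (by omega)
        rw [add_mul, one_mul] at h1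
        omega
  have hdown : sumDown δ q d ν k =
      ∑ x ∈ Finset.range i, ((δ + 2 * (x + 1)) * q - ν) + (d - i) * k := by
    rw [sumDown, sum_min_split _ hi]
    · intro x hx
      have h1 : (δ + 2 * (x + 1)) * q ≤ (δ + 2 * i) * q := mul_le_aux (by omega)
      omega
    · intro x hx
      have h1 : (δ + 2 * i + 2) * q ≤ (δ + 2 * (x + 1)) * q := mul_le_aux (by omega)
      rw [add_mul] at h1
      omega
  rw [hsplit, hdown]
  rw [Nat.cast_add, Nat.cast_add, Nat.cast_add, Nat.cast_add, Nat.cast_add, sum_up_AP,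
    sum_down_AP _ _ _ _ hν]
  push_cast [Nat.cast_sub hi]
  ring

theorem sumUpDown_minus {δ q d ν k i l : ℕ} (hi1 : 1 ≤ i) (hi : i ≤ d) (hν : ν ≤ q) (hl : l ≤ q)
    (hk : k + l = (δ + 2 * i) * q) :
    ((sumUp δ q d ν k + sumDown δ q d ν k : ℕ) : ℤ) =
      2 * q * (i * δ + i ^ 2) - l + (2 * (d - i) + 1) * k + min ν l := by
  obtain ⟨i, rfl⟩ : ∃ i', i = i' + 1 := ⟨i - 1, by omega⟩
  have e1 : (δ + 2 * (i + 1)) * q = (δ + 2 * i) * q + 2 * q := by ring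
  have hup : sumUp δ q d ν k =
      ∑ x ∈ Finset.range (i + 1), ((δ + 2 * x) * q + ν) + (d - i) * k := by
    rw [sumUp, sum_min_split (i := i + 1) _ (by omega), Nat.add_sub_add_right]
    · intro x hx
      have h1 : (δ + 2 * x) * q ≤ (δ + 2 * i) * q := mul_le_aux (by omega)
      omega
    · intro x hx
      have h1 : (δ + 2 * (i + 1)) * q ≤ (δ + 2 * x) * q := mul_le_aux (by omega)
      omega
  have hdown : sumDown δ q d ν k = ∑ x ∈ Finset.range i, ((δ + 2 * (x + 1)) * q - ν) +
      min ((δ + 2 * (i + 1)) * q - ν) k + (d - (i + 1)) * k := by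
    rw [sumDown, show Finset.range d = Finset.range (i + 1 + (d - (i + 1))) by congr 1; omega,
      Finset.sum_range_add, Finset.sum_range_succ]
    congr 1
    · congr 1
      refine Finset.sum_congr rfl fun x hx => min_eq_left ?_
      have := Finset.mem_range.1 hx
      have h1 : (δ + 2 * (x + 1)) * q ≤ (δ + 2 * i) * q := mul_le_aux (by omega)
      omega
    · rw [Finset.sum_congr rfl fun x _ => min_eq_right ?_]
      · simp
      · have h1 : (δ + 2 * (i + 1) + 2) * q ≤ (δ + 2 * (i + 1 + x + 1)) * q :=
          mul_le_aux (by omega)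
        rw [add_mul] at h1
        omega
  have hmin : ((min ((δ + 2 * (i + 1)) * q - ν) k : ℕ) : ℤ) = k - ν + min ν l := by omega
  have hk' : (k : ℤ) = (δ + 2 * (i + 1)) * q - l := by
    rw [eq_sub_iff_add_eq]; exact_mod_cast hk
  rw [hup, hdown]
  rw [Nat.cast_add, Nat.cast_add, Nat.cast_add, Nat.cast_add, sum_up_AP, sum_down_AP _ _ _ _ hν,
    hmin]
  push_cast [Nat.cast_sub hi, Nat.cast_sub (show i ≤ d by omega)]
  linear_combination hk'

/-- The interval `[δq, (δ + 2d + 1)q]` is covered by the intervals on which `kdim_plus` and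
`kdim_minus` apply. -/
theorem exists_region {δ q d k : ℕ} (hq : 0 < q) (h1 : δ * q ≤ k) (h2 : k ≤ (δ + 2 * d + 1) * q) :
    ∃ i ≤ d, ∃ l ≤ q, k = (δ + 2 * i) * q + l ∨ (1 ≤ i ∧ k + l = (δ + 2 * i) * q) := by
  obtain ⟨m, rfl⟩ := Nat.exists_eq_add_of_le h1
  have hm := Nat.div_add_mod m q
  have hlt := Nat.mod_lt m hq
  have hle : m ≤ (2 * d + 1) * q := by
    have : (δ + 2 * d + 1) * q = δ * q + (2 * d + 1) * q := by ring
    omega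
  have ht : m / q ≤ 2 * d + 1 := Nat.div_le_of_le_mul (by rwa [mul_comm])
  rcases Nat.even_or_odd' (m / q) with ⟨i, hi | hi⟩
  · refine ⟨i, by omega, m % q, hlt.le, Or.inl ?_⟩
    rw [hi] at hm
    linarith
  · rw [hi] at hm ht
    by_cases hid : i = d
    · subst hid
      refine ⟨i, le_rfl, q, le_rfl, Or.inl ?_⟩
      have : m % q = 0 := by
        have : (2 * i + 1) * q = q * (2 * i + 1) := mul_comm _ _
        omega
      rw [this] at hm
      linarith
    · refine ⟨i + 1, by omega, q - m % q, Nat.sub_le _ _, Or.inr ⟨by omega, ?_⟩⟩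
      zify [hlt.le] at hm ⊢
      linear_combination (-1 : ℤ) * hm

end Count

/-! ### Concavity, and the sum over the predicted blocks -/

section Final
variable {F : Type*} [Field F]

theorem kdim_mono {r s Q : ℕ} (hQ : raiseN F r s ^ Q = 0) {k m : ℕ} (h : k ≤ m) :
    kdim F r s k ≤ kdim F r s m := by
  obtain ⟨l, κ, hκ⟩ := exists_kdim_eq hQ
  rw [hκ, hκ]
  exact Finset.sum_le_sum fun i _ => min_le_min le_rfl h

theorem kdim_le (r s k : ℕ) : kdim F r s k ≤ r * s := by
  rw [← finrank_V (F := F)]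
  exact Submodule.finrank_le _

theorem kdim_concave {r s Q : ℕ} (hQ : raiseN F r s ^ Q = 0) (K a b : ℕ) :
    b * kdim F r s K + a * kdim F r s (K + a + b) ≤ (a + b) * kdim F r s (K + a) := by
  obtain ⟨l, κ, hκ⟩ := exists_kdim_eq hQ
  simp only [hκ, Finset.mul_sum, ← Finset.sum_add_distrib]
  refine Finset.sum_le_sum fun i _ => ?_
  generalize κ i = x
  rcases le_total x K with h | h
  · rw [min_eq_left h, min_eq_left (by omega), min_eq_left (by omega)]
    linarith
  · rw [min_eq_right h]
    rcases le_total x (K + a) with h' | h'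
    · rw [min_eq_left (by omega), min_eq_left h']
      nlinarith
    · rw [min_eq_right h']
      nlinarith [min_le_right x (K + a + b)]

theorem kdim_le_mul {r s Q : ℕ} (hQ : raiseN F r s ^ Q = 0) (k : ℕ) :
    kdim F r s k ≤ k * kdim F r s 1 := by
  obtain ⟨l, κ, hκ⟩ := exists_kdim_eq hQ
  simp only [hκ, Finset.mul_sum]
  refine Finset.sum_le_sum fun i _ => ?_
  rcases Nat.eq_zero_or_pos (κ i) with h | h
  · simp [h]
  · rw [min_eq_right (show 1 ≤ κ i from h), mul_one]
    exact min_le_right _ _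

theorem kdim_drop {r s Q : ℕ} (hQ : raiseN F r s ^ Q = 0) {k t m : ℕ} (h : k + t = m + 1) :
    kdim F r s k + t * kdim F r s (m + 1) ≤ kdim F r s (m + 1) + t * kdim F r s m := by
  obtain ⟨l, κ, hκ⟩ := exists_kdim_eq hQ
  simp only [hκ, Finset.mul_sum, ← Finset.sum_add_distrib]
  refine Finset.sum_le_sum fun i _ => ?_
  generalize κ i = x
  rcases Nat.lt_or_ge m x with h' | h'
  · rw [min_eq_right (by omega), min_eq_right (by omega), min_eq_right (by omega)]
    nlinarith
  · rw [min_eq_left (show x ≤ m + 1 by omega), min_eq_left h']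
    have := min_le_left x k
    omega

/-- `∑ min(β, k)` over all blocks `β` of the predicted decomposition. -/
def blockCount (c P D δ ρ E q d1 d2 : ℕ) {ℓ : ℕ} (ν nmul : Fin ℓ → ℕ) (k : ℕ) : ℕ :=
  c * min P k + (D * sumEven δ q d1 k + (ρ * min (δ * q) k + (E * sumOdd δ q d2 k +
    ∑ j, nmul j * (sumUp δ q d1 (ν j) k + sumDown δ q d1 (ν j) k))))

theorem sum_blocks (c P D δ ρ E q d1 d2 : ℕ) {ℓ : ℕ} (ν nmul : Fin ℓ → ℕ) (k : ℕ) :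
    ∑ x, min ((Sum.elim (fun _ : Fin c => P)
        (Sum.elim (fun x : Fin d1 × Fin D => (δ + 2 * ((x.1 : ℕ) + 1)) * q)
        (Sum.elim (fun _ : Fin ρ => δ * q)
        (Sum.elim (fun x : Fin d2 × Fin E => (δ + 2 * ((x.1 : ℕ) + 1) - 1) * q)
        (fun x : (j : Fin ℓ) × (Fin (d1 + 1) × Fin (nmul j) ⊕ Fin d1 × Fin (nmul j)) =>
          Sum.elim
            (fun y : Fin (d1 + 1) × Fin (nmul x.1) => (δ + 2 * (y.1 : ℕ)) * q + ν x.1)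
            (fun y : Fin d1 × Fin (nmul x.1) =>
              (δ + 2 * ((y.1 : ℕ) + 1)) * q - ν x.1) x.2))))) x) k =
      blockCount c P D δ ρ E q d1 d2 ν nmul k := by
  simp only [Fintype.sum_sum_type, Fintype.sum_prod_type, Fintype.sum_sigma, Sum.elim_inl,
    Sum.elim_inr, Finset.sum_const, Finset.card_univ, Fintype.card_fin, smul_eq_mul, blockCount,
    sumEven, sumOdd, sumUp, sumDown, Finset.sum_range, ← Finset.mul_sum, mul_add]

theorem sum_mul_affine {ℓ : ℕ} (nmul : Fin ℓ → ℕ) (f g : Fin ℓ → ℕ) (A : ℤ)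
    (h : ∀ j, (f j : ℤ) = A + g j) :
    ((∑ j, nmul j * f j : ℕ) : ℤ) = (∑ j, nmul j : ℕ) * A + (∑ j, nmul j * g j : ℕ) := by
  push_cast
  rw [Finset.sum_mul, ← Finset.sum_add_distrib]
  exact Finset.sum_congr rfl fun j _ => by rw [h]; ring

/-- From `(δ + 2d₁ + 1)q` on, `blockCount` only grows through the blocks `J_P`. -/
theorem blockCount_top {c P D δ ρ E q d1 d2 : ℕ} {ℓ : ℕ} {ν nmul : Fin ℓ → ℕ}
    (hν : ∀ j, ν j ≤ q) (hd2 : d2 ≤ d1 + 1) {k : ℕ} (hk : (δ + 2 * d1 + 1) * q ≤ k) :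
    blockCount c P D δ ρ E q d1 d2 ν nmul k + c * min P ((δ + 2 * d1 + 1) * q) =
      blockCount c P D δ ρ E q d1 d2 ν nmul ((δ + 2 * d1 + 1) * q) + c * min P k := by
  have hmin : ∀ x, x ≤ (δ + 2 * d1 + 1) * q → min x k = min x ((δ + 2 * d1 + 1) * q) := by
    intro x hx
    rw [min_eq_left hx, min_eq_left (hx.trans hk)]
  have e1 : sumEven δ q d1 k = sumEven δ q d1 ((δ + 2 * d1 + 1) * q) :=
    Finset.sum_congr rfl fun x hx => hmin _ (mul_le_aux (by
      have := Finset.mem_range.1 hx; omega))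
  have e2 : sumOdd δ q d2 k = sumOdd δ q d2 ((δ + 2 * d1 + 1) * q) :=
    Finset.sum_congr rfl fun x hx => hmin _ (mul_le_aux (by
      have := Finset.mem_range.1 hx; omega))
  have e3 : ∀ j, sumUp δ q d1 (ν j) k = sumUp δ q d1 (ν j) ((δ + 2 * d1 + 1) * q) := fun j =>
    Finset.sum_congr rfl fun x hx => hmin _ (by
      have := Finset.mem_range.1 hx
      have h1 : (δ + 2 * x + 1) * q ≤ (δ + 2 * d1 + 1) * q := mul_le_aux (by omega)
      have h2 : (δ + 2 * x + 1) * q = (δ + 2 * x) * q + q := by ring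
      have := hν j
      omega)
  have e4 : ∀ j, sumDown δ q d1 (ν j) k = sumDown δ q d1 (ν j) ((δ + 2 * d1 + 1) * q) := fun j =>
    Finset.sum_congr rfl fun x hx => hmin _ ((Nat.sub_le _ _).trans (mul_le_aux (by
      have := Finset.mem_range.1 hx; omega)))
  simp only [blockCount, e1, e2, e3, e4, hmin (δ * q) (mul_le_aux (by omega))]
  ring

/-- Up to the smallest block size every block contributes `k`. -/
theorem blockCount_low {c P D δ ρ E q d1 d2 : ℕ} {ℓ : ℕ} {ν nmul : Fin ℓ → ℕ}
    (hν : ∀ j, ν j ≤ q) {k : ℕ} (hk : k ≤ δ * q) (hP : c * min P k = c * k) :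
    blockCount c P D δ ρ E q d1 d2 ν nmul k =
      (c + D * d1 + ρ + E * d2 + (∑ j, nmul j) * (2 * d1 + 1)) * k := by
  have e1 : sumEven δ q d1 k = d1 * k := by
    rw [sumEven, sum_min_split (i := 0) _ (Nat.zero_le _)]
    · simp
    · intro x hx; omega
    · intro x _; exact hk.trans (mul_le_aux (by omega))
  have e2 : sumOdd δ q d2 k = d2 * k := by
    rw [sumOdd, sum_min_split (i := 0) _ (Nat.zero_le _)]
    · simp
    · intro x hx; omega
    · intro x _; exact hk.trans (mul_le_aux (by omega))
  have e3 : ∀ j, sumUp δ q d1 (ν j) k = (d1 + 1) * k := by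
    intro j
    rw [sumUp, sum_min_split (i := 0) _ (Nat.zero_le _)]
    · simp
    · intro x hx; omega
    · intro x _
      exact (hk.trans (mul_le_aux (by omega))).trans (Nat.le_add_right _ _)
  have e4 : ∀ j, sumDown δ q d1 (ν j) k = d1 * k := by
    intro j
    rw [sumDown, sum_min_split (i := 0) _ (Nat.zero_le _)]
    · simp
    · intro x hx; omega
    · intro x _
      have h1 : (δ + 1) * q ≤ (δ + 2 * (x + 1)) * q := mul_le_aux (by omega)
      have := hν j
      rw [add_mul] at h1
      omega
  simp only [blockCount, e1, e2, e3, e4, hP, min_eq_right hk, ← Finset.sum_mul]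
  ring

theorem blockCount_plus {c P D δ ρ E q d1 d2 : ℕ} {ℓ : ℕ} {ν nmul : Fin ℓ → ℕ}
    (hν : ∀ j, ν j ≤ q) (hd : d1 ≤ d2) {k i l : ℕ} (hi : i ≤ d1) (hl : l ≤ q)
    (hk : k = (δ + 2 * i) * q + l) (hP : c * min P k = c * k) :
    (blockCount c P D δ ρ E q d1 d2 ν nmul k : ℤ) = c * k +
      D * (q * (i * δ + i ^ 2 + i) + (d1 - i) * k) + ρ * (δ * q) +
      E * (q * (i * δ + i ^ 2) + (d2 - i) * k) +
      (∑ j, nmul j : ℕ) * (2 * q * (i * δ + i ^ 2) + (δ + 2 * i) * q + 2 * (d1 - i) * k) +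
      (∑ j, nmul j * min (ν j) l : ℕ) := by
  have h1 : (δ + 2 * i + 1) * q = (δ + 2 * i) * q + q := by ring
  have h2 : (δ + 2 * (i + 1)) * q = (δ + 2 * i) * q + 2 * q := by ring
  have h3 : δ * q ≤ (δ + 2 * i) * q := mul_le_aux (by omega)
  have h4 : (δ + 2 * i - 1) * q ≤ (δ + 2 * i) * q := mul_le_aux (by omega)
  rw [blockCount, hP, min_eq_left (show δ * q ≤ k by omega), Nat.cast_add, Nat.cast_add,
    Nat.cast_add, Nat.cast_add,
    sum_mul_affine nmul _ (fun j => min (ν j) l) _ fun j => by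
      rw [sumUpDown_plus hi (hν j) hl hk, Nat.cast_min], Nat.cast_mul, Nat.cast_mul,
    Nat.cast_mul, Nat.cast_mul, Nat.cast_mul, sumEven_eq hi (by omega) (by omega),
    sumOdd_eq (hi.trans hd) (fun _ => by omega) (by omega)]
  push_cast
  ring

theorem blockCount_minus {c P D δ ρ E q d1 d2 : ℕ} {ℓ : ℕ} {ν nmul : Fin ℓ → ℕ}
    (hν : ∀ j, ν j ≤ q) (hd : d1 ≤ d2) {k i l : ℕ} (hi1 : 1 ≤ i) (hi : i ≤ d1) (hl : l ≤ q)
    (hk : k + l = (δ + 2 * i) * q) (hP : c * min P k = c * k) :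
    (blockCount c P D δ ρ E q d1 d2 ν nmul k : ℤ) = c * k +
      D * (q * ((i - 1) * δ + i ^ 2 - i) + (d1 - i + 1) * k) + ρ * (δ * q) +
      E * (q * (i * δ + i ^ 2) + (d2 - i) * k) +
      (∑ j, nmul j : ℕ) * (2 * q * (i * δ + i ^ 2) - l + (2 * (d1 - i) + 1) * k) +
      (∑ j, nmul j * min (ν j) l : ℕ) := by
  obtain ⟨t, rfl⟩ : ∃ t, i = t + 1 := ⟨i - 1, by omega⟩
  have h1 : (δ + 2 * (t + 1) + 1) * q = (δ + 2 * t) * q + 3 * q := by ring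
  have h2 : (δ + 2 * (t + 1)) * q = (δ + 2 * t) * q + 2 * q := by ring
  have h3 : δ * q ≤ (δ + 2 * t) * q := mul_le_aux (by omega)
  have h4 : (δ + 2 * (t + 1) - 1) * q = (δ + 2 * t) * q + q := by
    rw [show δ + 2 * (t + 1) - 1 = δ + 2 * t + 1 by omega]; ring
  rw [blockCount, hP, min_eq_left (show δ * q ≤ k by omega), Nat.cast_add, Nat.cast_add,
    Nat.cast_add, Nat.cast_add,
    sum_mul_affine nmul _ (fun j => min (ν j) l) _ fun j => by
      rw [sumUpDown_minus hi1 hi (hν j) hl hk, Nat.cast_min], Nat.cast_mul, Nat.cast_mul,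
    Nat.cast_mul, Nat.cast_mul, Nat.cast_mul, sumEven_eq (i := t) (by omega) (by omega) (by omega),
    sumOdd_eq (hi.trans hd) (fun _ => by omega) (by omega)]
  push_cast
  ring

end Final

/-! ### The predicted blocks have the right kernel dimensions -/

section Main
variable {F : Type*} [Field F]

set_option maxHeartbeats 1000000 in
/-- The kernel dimensions of the powers of `J_r ⊗ J_s - 1` agree with those of the predicted Jordan
matrix. -/
theorem kdim_eq_blockCount (p : ℕ) [CharP F p] {q : ℕ} (hq0 : 0 < q)
    (hq : (1 + X : F[X]) ^ q = 1 + X ^ q) (hpq : (1 + X : F[X]) ^ (p * q) = 1 + X ^ (p * q))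
    {r0 s0 r1 s1 : ℕ} (hrs : r0 * q + r1 ≤ s0 * q + s1) (hs : s0 * q + s1 < p * q)
    (hr1 : 1 ≤ r1) (hs1 : 1 ≤ s1) (hr1s1 : r1 + s1 ≤ q)
    {ℓ : ℕ} {ν nmul : Fin ℓ → ℕ} (hνpos : ∀ j, 0 < ν j) (hnmul : ∀ j, 1 ≤ nmul j)
    (h1 : ∀ k, kdim F r1 s1 k = ∑ j, nmul j * min (ν j) k) (c d1 d2 : ℕ)
    (hcd : if r0 + s0 < p then c = 0 ∧ d1 = r0 ∧ d2 = r0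
      else c = r0 * q + r1 + (s0 * q + s1) - p * q ∧ d1 = p - s0 - 1 ∧ d2 = p - s0) (k : ℕ) :
    kdim F (r0 * q + r1) (s0 * q + s1) k =
      blockCount c (p * q) (Nat.dist r1 s1) (s0 - r0) (r1 - s1) (q - r1 - s1) q d1 d2 ν nmul k := by
  have h0 : r0 ≤ s0 := by
    by_contra h
    have : (s0 + 1) * q ≤ r0 * q := mul_le_aux (by omega)
    rw [add_mul] at this
    omega
  have hsp : s0 < p := by
    by_contra h
    have : p * q ≤ s0 * q := mul_le_aux (by omega)
    omega
  have hμ : ∑ j, nmul j = min r1 s1 := by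
    rw [← kdim_one (F := F) hr1 hs1, h1]
    exact Finset.sum_congr rfl fun j _ => by rw [min_eq_right (hνpos j), mul_one]
  have hfq : kdim F r1 s1 q = r1 * s1 := kdim_eq_of_le hq (by omega) (by omega) le_rfl
  have hν : ∀ j, ν j ≤ q := by
    have hfq1 : kdim F r1 s1 (q + 1) = r1 * s1 := kdim_eq_of_le hq (by omega) (by omega) (by omega)
    have h2 : ∑ j, nmul j * min (ν j) q = ∑ j, nmul j * min (ν j) (q + 1) := by
      rw [← h1, ← h1, hfq, hfq1]
    rw [Finset.sum_eq_sum_iff_of_le fun j _ =>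
      Nat.mul_le_mul_left _ (min_le_min le_rfl (Nat.le_succ q))] at h2
    intro j
    have h3 := Nat.eq_of_mul_eq_mul_left (hnmul j) (h2 j (Finset.mem_univ j))
    omega
  have hnil : raiseN F (r0 * q + r1) (s0 * q + s1) ^ (p * q) = 0 :=
    raiseN_pow_eq_zero hpq (by omega) (by omega)
  have hdist : Nat.dist r1 s1 = r1 + s1 - 2 * min r1 s1 := by
    rw [Nat.dist]; omega
  have hd12 : d1 ≤ d2 ∧ d2 ≤ d1 + 1 ∧ d1 ≤ r0 ∧ s0 + d1 + 1 ≤ p := by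
    split_ifs at hcd <;> omega
  obtain ⟨hd, hd', hd1r, hd1p⟩ := hd12
  -- the identity that makes the two cases of `(c, d₁, d₂)` behave alike
  have hH : (c : ℤ) + (r1 + s1) * d1 + (q - r1 - s1) * d2 = q * r0 := by
    split_ifs at hcd with hA
    · obtain ⟨rfl, rfl, rfl⟩ := hcd
      push_cast
      ring
    · obtain ⟨rfl, rfl, rfl⟩ := hcd
      have h2 : p * q ≤ (r0 + s0) * q := mul_le_aux (by omega)
      rw [add_mul] at h2
      push_cast [Nat.cast_sub (show p * q ≤ r0 * q + r1 + (s0 * q + s1) by omega),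
        Nat.cast_sub hsp.le, Nat.cast_sub (show 1 ≤ p - s0 by omega)]
      ring
  have hD : ((Nat.dist r1 s1 : ℕ) : ℤ) = r1 + s1 - 2 * (min r1 s1 : ℕ) := by omega
  have hρ : ((r1 - s1 : ℕ) : ℤ) = r1 - (min r1 s1 : ℕ) := by omega
  have hE : ((q - r1 - s1 : ℕ) : ℤ) = q - r1 - s1 := by omega
  have hδ : ((s0 - r0 : ℕ) : ℤ) = s0 - r0 := by omega
  generalize hδ' : s0 - r0 = δ at *
  have hcP : ∀ k, k ≤ (δ + 2 * d1 + 1) * q → c * min (p * q) k = c * k := by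
    intro k hk
    split_ifs at hcd with hA
    · rw [hcd.1, zero_mul, zero_mul]
    · rw [min_eq_right]
      exact hk.trans (mul_le_aux (by omega))
  -- on `[δq, (δ + 2d₁ + 1)q]` the formulas for `kdim` and for `blockCount` are both explicit
  have hmid : ∀ k, δ * q ≤ k → k ≤ (δ + 2 * d1 + 1) * q → kdim F (r0 * q + r1) (s0 * q + s1) k =
      blockCount c (p * q) (Nat.dist r1 s1) δ (r1 - s1) (q - r1 - s1) q d1 d2 ν nmul k := by
    intro k hk1 hk2
    obtain ⟨i, hi, l, hl, h | ⟨hi1, h⟩⟩ := exists_region hq0 hk1 hk2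
    · have hf := kdim_plus (F := F) p hq h0 (hi.trans hd1r) (by omega) (r1 := r1) (s1 := s1)
        (by omega) (by omega) hl
      rw [hδ', ← h] at hf
      have hg := blockCount_plus (D := Nat.dist r1 s1) (ρ := r1 - s1) (E := q - r1 - s1) hν hd hi hl
        h (nmul := nmul) (hcP k hk2)
      rw [← h1, hμ, hD, hρ, hE, hδ] at hg
      have hk' : (k : ℤ) = (s0 - r0 + 2 * i) * q + l := by
        rw [h]; push_cast [hδ]; ring
      zify
      rw [hf, hg]
      linear_combination (-(k : ℤ)) * hH - (q : ℤ) * (r0 - i) * hk'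
    · have hf := kdim_minus (F := F) p hq h0 (hi.trans hd1r) hi1 (by omega) (r1 := r1) (s1 := s1)
        (by omega) (by omega) hl
      rw [hδ', ← h, Nat.add_sub_cancel] at hf
      have hg := blockCount_minus (D := Nat.dist r1 s1) (ρ := r1 - s1) (E := q - r1 - s1) hν hd hi1
        hi hl h (nmul := nmul) (hcP k hk2)
      rw [← h1, hμ, hD, hρ, hE, hδ] at hg
      have hk' : (k : ℤ) = (s0 - r0 + 2 * i) * q - l := by
        have : ((k + l : ℕ) : ℤ) = _ := congrArg _ h
        push_cast [hδ] at this
        linarith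
      zify
      rw [hf, hg]
      linear_combination (-(k : ℤ)) * hH - ((q : ℤ) * (r0 - i) + r1 + s1 - (min r1 s1 : ℕ)) * hk'
  by_cases hk1 : k ≤ δ * q
  · -- below `δq` both sides are `r * k`
    have hKle : δ * q ≤ (δ + 2 * d1 + 1) * q := mul_le_aux (by omega)
    have hlow : ∀ k, k ≤ δ * q → blockCount c (p * q) (Nat.dist r1 s1) δ (r1 - s1) (q - r1 - s1) q
        d1 d2 ν nmul k = (r0 * q + r1) * k := by
      intro k hk
      rw [blockCount_low hν hk (hcP k (hk.trans hKle)), hμ]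
      congr 1
      zify
      push_cast [hD, hρ, hE]
      rw [← Nat.cast_min]
      linear_combination hH
    rw [hlow k hk1]
    have hK := hmid (δ * q) le_rfl hKle
    rw [hlow _ le_rfl] at hK
    apply le_antisymm
    · refine (kdim_le_mul hnil k).trans ?_
      rw [mul_comm]
      exact Nat.mul_le_mul_right _ (kdim_one_le' (by omega))
    · rcases Nat.eq_zero_or_pos (δ * q) with hz | hpos
      · have : k = 0 := by omega
        subst this
        simp
      · obtain ⟨b, hb⟩ := Nat.exists_eq_add_of_le hk1
        have := kdim_concave hnil 0 k b
        rw [zero_add, ← hb, hK] at this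
        refine Nat.le_of_mul_le_mul_left ?_ hpos
        nlinarith
  by_cases hk2 : k ≤ (δ + 2 * d1 + 1) * q
  · exact hmid k (by omega) hk2
  have hK := hmid ((δ + 2 * d1 + 1) * q) (mul_le_aux (by omega)) le_rfl
  have htop := blockCount_top (c := c) (P := p * q) (D := Nat.dist r1 s1) (ρ := r1 - s1)
    (E := q - r1 - s1) hν hd' (nmul := nmul) (show (δ + 2 * d1 + 1) * q ≤ k by omega)
  have hf := kdim_plus (F := F) p hq h0 hd1r hd1p (r1 := r1) (s1 := s1)
    (by omega) (by omega) (le_refl q)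
  rw [hδ', show (δ + 2 * d1) * q + q = (δ + 2 * d1 + 1) * q by ring, hfq] at hf
  split_ifs at hcd with hA
  · obtain ⟨rfl, rfl, rfl⟩ := hcd
    rw [zero_mul, zero_mul, add_zero, add_zero, ← hK] at htop
    rw [htop]
    refine le_antisymm ((kdim_le _ _ _).trans (le_of_eq ?_)) (kdim_mono hnil (by omega))
    zify
    rw [hf]
    push_cast
    ring
  · have hKp : (δ + 2 * d1 + 1) * q < p * q := Nat.mul_lt_mul_of_pos_right (by omega) hq0
    have hc : (c : ℤ) = r0 * q + r1 + (s0 * q + s1) - p * q := by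
      have h2 : p * q ≤ (r0 + s0) * q := mul_le_aux (by omega)
      rw [add_mul] at h2
      rw [hcd.1]
      push_cast [Nat.cast_sub (show p * q ≤ r0 * q + r1 + (s0 * q + s1) by omega)]
      ring
    have hd1 : (d1 : ℤ) = p - s0 - 1 := by omega
    rw [min_eq_right hKp.le, ← hK] at htop
    have hfK : (kdim F (r0 * q + r1) (s0 * q + s1) ((δ + 2 * d1 + 1) * q) : ℤ) =
        (r0 * q + r1) * (s0 * q + s1) - c * (p * q - ((δ + 2 * d1 + 1) * q : ℕ)) := by
      rw [hf, hc]
      push_cast [hδ, hd1]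
      ring
    have hfP : ∀ m, p * q ≤ m → kdim F (r0 * q + r1) (s0 * q + s1) m =
        (r0 * q + r1) * (s0 * q + s1) := fun m hm =>
      kdim_eq_of_le hpq (by omega) (by omega) hm
    generalize (δ + 2 * d1 + 1) * q = K at *
    rcases le_total (p * q) k with hkp | hkp
    · rw [min_eq_left hkp] at htop
      rw [hfP k hkp]
      zify at htop ⊢
      rw [hfK] at htop
      linear_combination -htop
    · rw [min_eq_right hkp] at htop
      have hval : (blockCount c (p * q) (Nat.dist r1 s1) δ (r1 - s1) (q - r1 - s1) q d1 d2 ν nmul k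
          : ℤ) = (r0 * q + r1) * (s0 * q + s1) - c * (p * q - k) := by
        zify at htop
        rw [hfK] at htop
        linear_combination htop
      zify
      rw [hval]
      apply le_antisymm
      · -- the slope of `kdim` just below `pq` is at least `c`, hence everywhere before
        obtain ⟨m, hm⟩ : ∃ m, p * q = m + 1 := ⟨p * q - 1, by omega⟩
        have h2 := kdim_drop hnil (k := k) (t := p * q - k) (m := m) (by omega)
        have h3 := kdim_top (F := F) (s := s0 * q + s1) hpq (show 1 ≤ r0 * q + r1 by omega) (by omega)
        rw [← hcd.1, hm, Nat.add_sub_cancel] at h3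
        rw [← hm, hfP _ le_rfl] at h2
        zify [hkp] at h2 h3
        have h4 : (0 : ℤ) ≤ p * q - k := by
          have : ((k : ℕ) : ℤ) ≤ ((p * q : ℕ) : ℤ) := by exact_mod_cast hkp
          push_cast at this
          linarith
        nlinarith [mul_le_mul_of_nonneg_left h3 h4]
      · -- concavity between `K` and `pq`
        obtain ⟨a, rfl⟩ := Nat.exists_eq_add_of_le (show K ≤ k by omega)
        obtain ⟨b, hb⟩ := Nat.exists_eq_add_of_le hkp
        have h2 := kdim_concave hnil K a b
        rw [← hb, hfP _ le_rfl] at h2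
        have hb' : (p : ℤ) * q = K + a + b := by exact_mod_cast hb
        zify at h2
        rw [hfK, hb'] at h2
        rw [hb']
        have hab : (0 : ℤ) < a + b := by
          have : 0 < a + b := by omega
          exact_mod_cast this
        push_cast
        refine le_of_mul_le_mul_left (le_trans (le_of_eq ?_) h2) hab
        ring

end Main

/-- Renaud's reduction formula: the decomposition of `J_r ⊗ J_s` for `1 ≤ r ≤ s < p^{n+1}`
in terms of the decomposition of `J_{r₁} ⊗ J_{s₁}`, where `r = r₀pⁿ + r₁`, `s = s₀pⁿ + s₁`. -/
theorem stmt_9 {F : Type*} [Field F] (p : ℕ) (hp : p.Prime) [CharP F p]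
    (n : ℕ) (hn : 0 < n) (r s r0 s0 r1 s1 : ℕ)
    (hr : 1 ≤ r) (hrs : r ≤ s) (hs : s < p ^ (n + 1))
    (hrdec : r = r0 * p ^ n + r1) (hsdec : s = s0 * p ^ n + s1)
    (hr1 : 1 ≤ r1) (hs1 : 1 ≤ s1) (hr1s1 : r1 + s1 ≤ p ^ n)
    (ℓ : ℕ) (ν : Fin ℓ → ℕ) (nmul : Fin ℓ → ℕ)
    (hν : StrictAnti ν) (hνpos : ∀ j, 0 < ν j) (hnmul : ∀ j, 1 ≤ nmul j)
    (hsim1 : MatSimilar F (jordanBlock F r1 ⊗ₖ jordanBlock F s1)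
      (jordanBlockDiag F (fun x : (j : Fin ℓ) × Fin (nmul j) => ν x.1)))
    (c d1 d2 : ℕ)
    (hcd : if r0 + s0 < p then c = 0 ∧ d1 = r0 ∧ d2 = r0
      else c = r + s - p ^ (n + 1) ∧ d1 = p - s0 - 1 ∧ d2 = p - s0) :
    MatSimilar F (jordanBlock F r ⊗ₖ jordanBlock F s)
      (jordanBlockDiag F
        (Sum.elim (fun _ : Fin c => p ^ (n + 1))
        (Sum.elim (fun x : Fin d1 × Fin (Nat.dist r1 s1) =>
            (s0 - r0 + 2 * ((x.1 : ℕ) + 1)) * p ^ n)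
        (Sum.elim (fun _ : Fin (r1 - s1) => (s0 - r0) * p ^ n)
        (Sum.elim (fun x : Fin d2 × Fin (p ^ n - r1 - s1) =>
            (s0 - r0 + 2 * ((x.1 : ℕ) + 1) - 1) * p ^ n)
        (fun x : (j : Fin ℓ) ×
            (Fin (d1 + 1) × Fin (nmul j) ⊕ Fin d1 × Fin (nmul j)) =>
          Sum.elim
            (fun y : Fin (d1 + 1) × Fin (nmul x.1) =>
              (s0 - r0 + 2 * (y.1 : ℕ)) * p ^ n + ν x.1)
            (fun y : Fin d1 × Fin (nmul x.1) =>
              (s0 - r0 + 2 * ((y.1 : ℕ) + 1)) * p ^ n - ν x.1) x.2)))))) := by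
  have hfrob : ∀ m, (1 + X : F[X]) ^ p ^ m = 1 + X ^ p ^ m := fun m => by
    have : Fact p.Prime := ⟨hp⟩
    rw [add_pow_char_pow, one_pow]
  have hP : p ^ (n + 1) = p * p ^ n := pow_succ' p n
  have hnil : raiseN F r s ^ p ^ (n + 1) = 0 :=
    raiseN_pow_eq_zero (hfrob _) (by omega) (by omega)
  have h1 : ∀ k, kdim F r1 s1 k = ∑ j, nmul j * min (ν j) k := fun k => by
    rw [kdim_of_similar _ hsim1 k, Fintype.sum_sigma]
    simp
  refine similar_of_kdim hnil _ fun k => ?_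
  rw [sum_blocks]
  have hpq := hfrob (n + 1)
  rw [hP] at hpq hs hcd ⊢
  subst hrdec hsdec
  exact kdim_eq_blockCount p (pow_pos hp.pos n) (hfrob n) hpq hrs hs hr1 hs1 hr1s1 hνpos hnmul h1
    c d1 d2 hcd k
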